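/- For every nondegenerate triangle K in the plane with longest edge length h, and every function u in V_FM(K), one has ‖u‖_K ≤ 0.07353·h²·‖D²u‖_K. In other words, the optimal constant C₀(K) in the Fujino–Morley interpolation error estimate ‖u‖_K ≤ C₀(K)‖D²u‖_K over V_FM(K) satisfies C₀(K) ≤ 0.07353·h² for triangles of arbitrary shape. -/

import Mathlib

/-!
The triangle is mapped affinely to the reference triangle `T`, so that `‖u‖²` becomes `N2 u` and
`‖D²u‖²` becomes an energy `∫ q(∂₁₁u, ∂₁₂u, ∂₂₂u)` with a quadratic form `q` depending on the shape
of the triangle, up to the common Jacobian factor. The conditions on the space say that the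
transformed function vanishes at the vertices and has a Hessian of mean zero (`InV`).

*Reduction to two shapes.* Let the first edge be a shortest one. `pointwise` shows that, after
division by `h⁴`, a convex combination of two fixed forms `Qf 1 (2/3) (1/9)` (the equilateral
triangle) and `Qf (37/16) (23/24) (1/16)` (flat triangles) bounds `q` from below. It therefore
suffices to prove `184.96 ‖w‖² ≤ En w` for these two energies (`bound_iso`, `bound_aniso`), since
`0.07353² ⬝ 184.96 ≥ 1`.

*Bounding the first eigenvalue on the reference triangle.* An energy splits orthogonally into the
energy of the quadratic (Morley) interpolant and that of the interpolation error (`En_split`), and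
the error lies again in the space. Cutting `T` into four similar triangles, applying the splitting
on each and treating the interpolants by an explicit finite-dimensional inequality (`Disc`, proved by
sums of squares) improves a given constant (`step`). Iteration yields a crude constant (`crude`),
the starting error being controlled by the oscillation of the second derivatives. One more step on
the functions whose values at the edge midpoints add up to zero gives a constant above the target:
the form `En - 184.96 N2` is coercive on this hyperplane (`defl_iso`, `defl_aniso`).

*The remaining direction.* A polynomial `V` close to the first eigenfunction spans a complement
of that hyperplane. Polynomial tensor fields `C ≈ q'(D²V)` with `div div C = 184.96 V` and suitable
values on the boundary give a weak eigenvalue equation for `V` with an explicit small residual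
(`weak_form`). If the squared residual is below the product of the coercivity constant and the defect
`En V - 184.96 N2 V`, the form is nonnegative on the whole space (`temple`, `certificate`); this is
an inequality between rational numbers, checked by exact integration of polynomials.
-/

open MeasureTheory Real

noncomputable section

/-- Points of the plane. -/
abbrev Pt : Type := ℝ × ℝ

/-- The closed triangle with vertices `O`, `A`, `B`. -/
def Tri (O A B : Pt) : Set Pt := convexHull ℝ {O, A, B}

/-- The triangle with vertices `O`, `A`, `B` is nondegenerate. -/
def Nondeg (O A B : Pt) : Prop := ¬ Collinear ℝ ({O, A, B} : Set Pt)

/-- Euclidean length of a vector of the plane. -/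
def elen (v : Pt) : ℝ := Real.sqrt (v.1 ^ 2 + v.2 ^ 2)

/-- Partial derivative in the `x` direction. -/
def pdx (u : Pt → ℝ) (p : Pt) : ℝ := fderiv ℝ u p (1, 0)

/-- Partial derivative in the `y` direction. -/
def pdy (u : Pt → ℝ) (p : Pt) : ℝ := fderiv ℝ u p (0, 1)

/-- `‖u‖_K²  = ∫_K u² dxdy`. -/
def l2sq (u : Pt → ℝ) (K : Set Pt) : ℝ := ∫ p in K, (u p) ^ 2

/-- `‖∇u‖_K² = ∫_K (u_x² + u_y²) dxdy`. -/
def h1sq (u : Pt → ℝ) (K : Set Pt) : ℝ := ∫ p in K, ((pdx u p) ^ 2 + (pdy u p) ^ 2)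

/-- `‖D²u‖_K² = ∫_K (u_xx² + u_xy² + u_yx² + u_yy²) dxdy`. -/
def h2sq (u : Pt → ℝ) (K : Set Pt) : ℝ :=
  ∫ p in K, ((pdx (pdx u) p) ^ 2 + (pdy (pdx u) p) ^ 2
    + (pdx (pdy u) p) ^ 2 + (pdy (pdy u) p) ^ 2)

/-- `‖u‖_K`. -/
def l2norm (u : Pt → ℝ) (K : Set Pt) : ℝ := Real.sqrt (l2sq u K)

/-- `‖∇u‖_K`. -/
def h1norm (u : Pt → ℝ) (K : Set Pt) : ℝ := Real.sqrt (h1sq u K)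

/-- `‖D²u‖_K`. -/
def h2norm (u : Pt → ℝ) (K : Set Pt) : ℝ := Real.sqrt (h2sq u K)

/-- `u` is twice continuously differentiable on an open neighborhood of `K`. -/
def Smooth2 (u : Pt → ℝ) (K : Set Pt) : Prop :=
  ∃ U : Set Pt, IsOpen U ∧ K ⊆ U ∧ ContDiffOn ℝ 2 u U

/-- `w` is continuously differentiable on an open neighborhood of `K`. -/
def Smooth1 (w : Pt → ℝ) (K : Set Pt) : Prop :=
  ∃ U : Set Pt, IsOpen U ∧ K ⊆ U ∧ ContDiffOn ℝ 1 w U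

/-- Line integral of `g` along the edge from `P` to `Q`:
`∫_e g ds = |Q − P| ∫₀¹ g(P + t(Q−P)) dt`. -/
def edgeInt (g : Pt → ℝ) (P Q : Pt) : ℝ :=
  elen (Q - P) * ∫ t in (0:ℝ)..1, g (P + t • (Q - P))

/-- Outward unit normal of the edge from `P` to `Q` of the triangle whose third vertex is `R`
(the unit vector perpendicular to `Q − P` pointing away from `R`). -/
def outNormal (P Q R : Pt) : Pt :=
  (if (Q - P).2 * (R - P).1 - (Q - P).1 * (R - P).2 ≤ 0 then (elen (Q - P))⁻¹
    else -(elen (Q - P))⁻¹) • ((Q - P).2, -((Q - P).1))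

/-- The normal derivative `∂u/∂n = ∇u ⋅ n` along the edge from `P` to `Q`,
with `n` the outward normal (w.r.t. third vertex `R`). -/
def normalDeriv (u : Pt → ℝ) (P Q R : Pt) (p : Pt) : ℝ := fderiv ℝ u p (outNormal P Q R)

/-- `u ∈ V_FM(K)` for the triangle `K` with vertices `O`, `A`, `B`: `u` is C² near `K`,
vanishes at the three vertices, and has vanishing mean normal derivative on each edge. -/
def MemVFM (u : Pt → ℝ) (O A B : Pt) : Prop :=
  Smooth2 u (Tri O A B) ∧ u O = 0 ∧ u A = 0 ∧ u B = 0 ∧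
  edgeInt (normalDeriv u O A B) O A = 0 ∧
  edgeInt (normalDeriv u A B O) A B = 0 ∧
  edgeInt (normalDeriv u B O A) B O = 0

/-- `w ∈ V_CR(K)` for the triangle `K` with vertices `O`, `A`, `B`: `w` is C¹ near `K`
and has vanishing mean value on each edge. -/
def MemVCR (w : Pt → ℝ) (O A B : Pt) : Prop :=
  Smooth1 w (Tri O A B) ∧
  edgeInt w O A = 0 ∧ edgeInt w A B = 0 ∧ edgeInt w B O = 0

/-- The longest edge length of the triangle with vertices `O`, `A`, `B`. -/
def longestEdge (O A B : Pt) : ℝ := max (elen (A - O)) (max (elen (B - A)) (elen (O - B)))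

/-- The linear map with matrix `[[1, α], [0, β]]`. -/
def Qmap (α β : ℝ) (p : Pt) : Pt := (p.1 + α * p.2, β * p.2)

/-- The inverse of `Qmap α β` (for `β ≠ 0`). -/
def Qinv (α β : ℝ) (p : Pt) : Pt := (p.1 - (α / β) * p.2, p.2 / β)

namespace FM

/-! ### Integration over the reference triangle -/

/-- The reference triangle with vertices `(0,0)`, `(1,0)`, `(0,1)`. -/
def T : Set Pt := {p | 0 ≤ p.1 ∧ 0 ≤ p.2 ∧ p.1 + p.2 ≤ 1}

/-- Integral over the reference triangle. -/
def J (f : Pt → ℝ) : ℝ := ∫ p in T, f p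

lemma isClosed_T : IsClosed T := by
  have h1 : IsClosed {p : Pt | 0 ≤ p.1} := isClosed_le continuous_const continuous_fst
  have h2 : IsClosed {p : Pt | 0 ≤ p.2} := isClosed_le continuous_const continuous_snd
  have h3 : IsClosed {p : Pt | p.1 + p.2 ≤ 1} :=
    isClosed_le (continuous_fst.add continuous_snd) continuous_const
  have : T = {p : Pt | 0 ≤ p.1} ∩ ({p : Pt | 0 ≤ p.2} ∩ {p : Pt | p.1 + p.2 ≤ 1}) := by
    ext p; simp [T]
  rw [this]
  exact h1.inter (h2.inter h3)

lemma measurableSet_T : MeasurableSet T := isClosed_T.measurableSet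

lemma isCompact_T : IsCompact T := by
  refine IsCompact.of_isClosed_subset (isCompact_Icc (a := ((0, 0) : Pt)) (b := (1, 1)))
    isClosed_T ?_
  rintro ⟨x, y⟩ ⟨h1, h2, h3⟩
  simp only at h1 h2 h3
  exact ⟨⟨h1, h2⟩, ⟨by simp; linarith, by simp; linarith⟩⟩

lemma convex_T : Convex ℝ T := by
  rintro ⟨x, y⟩ ⟨h1, h2, h3⟩ ⟨x', y'⟩ ⟨h1', h2', h3'⟩ a b ha hb hab
  simp only at h1 h2 h3 h1' h2' h3'
  refine ⟨?_, ?_, ?_⟩ <;> simp only [Prod.fst_add, Prod.smul_fst, Prod.snd_add, Prod.smul_snd,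
    smul_eq_mul]
  · positivity
  · positivity
  · nlinarith

lemma intT {f : Pt → ℝ} (hf : Continuous f) : IntegrableOn f T :=
  hf.continuousOn.integrableOn_compact isCompact_T

lemma J_add {f g : Pt → ℝ} (hf : Continuous f) (hg : Continuous g) :
    J (fun p => f p + g p) = J f + J g := integral_add (intT hf) (intT hg)

lemma J_sub {f g : Pt → ℝ} (hf : Continuous f) (hg : Continuous g) :
    J (fun p => f p - g p) = J f - J g := integral_sub (intT hf) (intT hg)

lemma J_mul (c : ℝ) (f : Pt → ℝ) : J (fun p => c * f p) = c * J f :=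
  integral_const_mul c f

lemma J_mono {f g : Pt → ℝ} (hf : Continuous f) (hg : Continuous g) (h : ∀ p ∈ T, f p ≤ g p) :
    J f ≤ J g := setIntegral_mono_on (intT hf) (intT hg) measurableSet_T h

lemma J_nonneg {f : Pt → ℝ} (h : ∀ p, 0 ≤ f p) : 0 ≤ J f := integral_nonneg h

lemma J_iter {f : Pt → ℝ} (hf : Continuous f) :
    J f = ∫ s in (0:ℝ)..1, ∫ t in (0:ℝ)..(1 - s), f (s, t) := by
  have h1 : J f = ∫ p : ℝ × ℝ, T.indicator f p := (integral_indicator measurableSet_T).symm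
  rw [h1, Measure.volume_eq_prod, integral_prod]
  · rw [intervalIntegral.integral_of_le zero_le_one, ← integral_Icc_eq_integral_Ioc,
      ← integral_indicator measurableSet_Icc]
    congr 1
    ext s
    by_cases hs : s ∈ Set.Icc (0:ℝ) 1
    · rw [Set.indicator_of_mem hs,
        intervalIntegral.integral_of_le (by linarith [hs.2] : (0:ℝ) ≤ 1 - s),
        ← integral_Icc_eq_integral_Ioc, ← integral_indicator measurableSet_Icc]
      congr 1
      ext t
      have : (s, t) ∈ T ↔ t ∈ Set.Icc (0:ℝ) (1 - s) := by
        simp only [T, Set.mem_ofPred_eq, Set.mem_Icc]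
        constructor
        · rintro ⟨_, h, h'⟩; exact ⟨h, by linarith⟩
        · rintro ⟨h, h'⟩; exact ⟨hs.1, h, by linarith⟩
      by_cases ht : t ∈ Set.Icc (0:ℝ) (1 - s)
      · rw [Set.indicator_of_mem ht, Set.indicator_of_mem (this.2 ht)]
      · rw [Set.indicator_of_notMem ht, Set.indicator_of_notMem (fun h => ht (this.1 h))]
    · rw [Set.indicator_of_notMem hs]
      have : ∀ t, T.indicator f (s, t) = 0 := by
        intro t
        apply Set.indicator_of_notMem
        rintro ⟨a, b, c⟩
        exact hs ⟨a, by simp only at a b c; linarith⟩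
      simp [this]
  · rw [← Measure.volume_eq_prod]
    exact (intT hf).integrable_indicator measurableSet_T

lemma J_swap (f : Pt → ℝ) : J (fun p => f (p.2, p.1)) = J f := by
  have h1 : ∀ g : Pt → ℝ, J g = ∫ p : ℝ × ℝ, T.indicator g p :=
    fun g => (integral_indicator measurableSet_T).symm
  rw [h1, h1, Measure.volume_eq_prod, ← integral_prod_swap]
  congr 1
  ext ⟨x, y⟩
  have : (x, y) ∈ T ↔ (y, x) ∈ T := by
    simp only [T, Set.mem_ofPred_eq]
    constructor <;> rintro ⟨a, b, c⟩ <;> exact ⟨b, a, by linarith⟩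
  by_cases h : (x, y) ∈ T
  · simp [Set.indicator_of_mem h, Set.indicator_of_mem (this.1 h)]
  · simp [Set.indicator_of_notMem h, Set.indicator_of_notMem (fun hh => h (this.2 hh))]

/-- The linear form `(x, y) ↦ a x + b y`. -/
def L (a b : ℝ) : Pt →L[ℝ] ℝ :=
  a • ContinuousLinearMap.fst ℝ ℝ ℝ + b • ContinuousLinearMap.snd ℝ ℝ ℝ

@[simp] lemma L_apply (a b : ℝ) (p : Pt) : L a b p = a * p.1 + b * p.2 := by simp [L]

/-- Derivative of a function of two variables along a curve. -/
lemma hasDerivAt_curve {f f1 f2 : Pt → ℝ} (h : ∀ p, HasFDerivAt f (L (f1 p) (f2 p)) p)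
    {x y : ℝ → ℝ} {x' y' t : ℝ} (hx : HasDerivAt x x' t) (hy : HasDerivAt y y' t) :
    HasDerivAt (fun t => f (x t, y t)) (f1 (x t, y t) * x' + f2 (x t, y t) * y') t := by
  have := (h (x t, y t)).comp_hasDerivAt (f := fun t => (x t, y t)) t (hx.prodMk hy)
  exact this.congr_deriv (L_apply _ _ _)

lemma cont_of_hasFDeriv {f f1 f2 : Pt → ℝ} (h : ∀ p, HasFDerivAt f (L (f1 p) (f2 p)) p) :
    Continuous f := continuous_iff_continuousAt.2 fun p => (h p).continuousAt

/-- Gauss' theorem on the reference triangle, second variable. -/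
lemma J_d2 {f f1 f2 : Pt → ℝ} (h : ∀ p, HasFDerivAt f (L (f1 p) (f2 p)) p)
    (hc : Continuous f2) :
    J f2 = ∫ s in (0:ℝ)..1, (f (s, 1 - s) - f (s, 0)) := by
  rw [J_iter hc]
  congr 1
  ext s
  refine intervalIntegral.integral_eq_sub_of_hasDerivAt (f := fun t => f (s, t)) ?_ ?_
  · intro t _
    simpa using hasDerivAt_curve h (hasDerivAt_const t s) (hasDerivAt_id t)
  · exact (hc.comp (by fun_prop : Continuous fun t : ℝ => (s, t))).intervalIntegrable _ _

/-- Gauss' theorem on the reference triangle, first variable. -/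
lemma J_d1 {f f1 f2 : Pt → ℝ} (h : ∀ p, HasFDerivAt f (L (f1 p) (f2 p)) p)
    (hc : Continuous f1) :
    J f1 = ∫ t in (0:ℝ)..1, (f (1 - t, t) - f (0, t)) := by
  rw [← J_swap]
  have h' : ∀ p : Pt, HasFDerivAt (fun p : Pt => f (p.2, p.1))
      (L (f2 (p.2, p.1)) (f1 (p.2, p.1))) p := by
    intro p
    have hs : HasFDerivAt (fun p : Pt => ((p.2, p.1) : Pt))
        ((ContinuousLinearMap.snd ℝ ℝ ℝ).prod (ContinuousLinearMap.fst ℝ ℝ ℝ)) p :=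
      hasFDerivAt_snd.prodMk hasFDerivAt_fst
    have := (h (p.2, p.1)).comp p hs
    refine this.congr_fderiv ?_
    ext <;> simp
  have hc' : Continuous fun p : Pt => f1 (p.2, p.1) := hc.comp (by fun_prop)
  exact J_d2 h' hc'

/-- The affine map `(s, t) ↦ o + s a + t b`. -/
def aff (o a b p : Pt) : Pt := (o.1 + p.1 * a.1 + p.2 * b.1, o.2 + p.1 * a.2 + p.2 * b.2)

lemma continuous_aff (o a b : Pt) : Continuous (aff o a b) := by
  unfold aff; fun_prop

/-- Integral over the reference triangle, split over the four triangles cut out by the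
midlines. -/
lemma J_split {f : Pt → ℝ} (hf : Continuous f) :
    J f = (1 / 4) * (J (fun p => f (aff (0, 0) (1/2, 0) (0, 1/2) p))
      + J (fun p => f (aff (1/2, 0) (1/2, 0) (0, 1/2) p))
      + J (fun p => f (aff (0, 1/2) (1/2, 0) (0, 1/2) p))
      + J (fun p => f (aff (1/2, 1/2) (-1/2, 0) (0, -1/2) p))) := by
  have hg : ∀ a b : Pt, ∀ o, Continuous fun p => f (aff o a b p) :=
    fun a b o => hf.comp (continuous_aff o a b)
  rw [J_iter hf, J_iter (hg _ _ _), J_iter (hg _ _ _), J_iter (hg _ _ _), J_iter (hg _ _ _)]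
  have ci : ∀ (s a b : ℝ), IntervalIntegrable (fun t => f (s, t)) volume a b := fun s a b =>
    (hf.comp (by fun_prop : Continuous fun t : ℝ => (s, t))).intervalIntegrable _ _
  have cp : ∀ (x y : ℝ → ℝ), Continuous x → Continuous y →
      Continuous fun s => ∫ t in (x s)..(y s), f (s, t) := by
    intro x y hx hy
    have h1 : ∀ z : ℝ → ℝ, Continuous z → Continuous fun s => ∫ t in (0:ℝ)..(z s), f (s, t) :=
      fun z hz => intervalIntegral.continuous_parametric_intervalIntegral_of_continuous
        (f := fun s t => f (s, t)) hf hz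
    have : (fun s => ∫ t in (x s)..(y s), f (s, t)) =
        fun s => (∫ t in (0:ℝ)..(y s), f (s, t)) - ∫ t in (0:ℝ)..(x s), f (s, t) := by
      ext s
      rw [intervalIntegral.integral_interval_sub_left (ci _ _ _) (ci _ _ _)]
    rw [this]
    exact (h1 y hy).sub (h1 x hx)
  have c0 : Continuous fun s => ∫ t in (0:ℝ)..(1 - s), f (s, t) :=
    cp _ _ (by fun_prop) (by fun_prop)
  have c1 : Continuous fun s => ∫ t in (0:ℝ)..(1/2 - s), f (s, t) :=
    cp _ _ (by fun_prop) (by fun_prop)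
  have c2 : Continuous fun s => ∫ t in (1/2 - s)..(1/2), f (s, t) :=
    cp _ _ (by fun_prop) (by fun_prop)
  have c3 : Continuous fun s => ∫ t in (1/2)..(1 - s), f (s, t) :=
    cp _ _ (by fun_prop) (by fun_prop)
  have e1 : (∫ s in (0:ℝ)..1, ∫ t in (0:ℝ)..(1 - s), f (aff (0, 0) (1/2, 0) (0, 1/2) (s, t)))
      = 4 * ∫ s in (0:ℝ)..(1/2), ∫ t in (0:ℝ)..(1/2 - s), f (s, t) := by
    have : ∀ s : ℝ, (∫ t in (0:ℝ)..(1 - s), f (aff (0, 0) (1/2, 0) (0, 1/2) (s, t)))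
        = (fun s => 2 * ∫ t in (0:ℝ)..(1/2 - s), f (s, t)) (s * (1/2)) := by
      intro s
      have := intervalIntegral.integral_comp_mul_add (a := 0) (b := 1 - s)
        (fun t => f (s * (1/2), t)) (c := 1/2) (by norm_num) 0
      simp only [aff]
      convert this using 2
      · ext t; ring_nf
      · norm_num; congr 1; ring
    simp_rw [this]
    rw [intervalIntegral.integral_comp_mul_right (fun s => 2 * ∫ t in (0:ℝ)..(1/2 - s), f (s, t))
      (by norm_num : (1/2:ℝ) ≠ 0), intervalIntegral.integral_const_mul]
    norm_num
    ring
  have e2 : (∫ s in (0:ℝ)..1, ∫ t in (0:ℝ)..(1 - s), f (aff (1/2, 0) (1/2, 0) (0, 1/2) (s, t)))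
      = 4 * ∫ s in (1/2:ℝ)..1, ∫ t in (0:ℝ)..(1 - s), f (s, t) := by
    have : ∀ s : ℝ, (∫ t in (0:ℝ)..(1 - s), f (aff (1/2, 0) (1/2, 0) (0, 1/2) (s, t)))
        = (fun s => 2 * ∫ t in (0:ℝ)..(1 - s), f (s, t)) ((1/2) * s + 1/2) := by
      intro s
      have := intervalIntegral.integral_comp_mul_add (a := 0) (b := 1 - s)
        (fun t => f ((1/2) * s + 1/2, t)) (c := 1/2) (by norm_num) 0
      simp only [aff]
      convert this using 2
      · ext t; ring_nf
      · norm_num; congr 1; ring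
    simp_rw [this]
    rw [intervalIntegral.integral_comp_mul_add (fun s => 2 * ∫ t in (0:ℝ)..(1 - s), f (s, t))
      (by norm_num : (1/2:ℝ) ≠ 0), intervalIntegral.integral_const_mul]
    norm_num
    ring
  have e3 : (∫ s in (0:ℝ)..1, ∫ t in (0:ℝ)..(1 - s), f (aff (0, 1/2) (1/2, 0) (0, 1/2) (s, t)))
      = 4 * ∫ s in (0:ℝ)..(1/2), ∫ t in (1/2)..(1 - s), f (s, t) := by
    have : ∀ s : ℝ, (∫ t in (0:ℝ)..(1 - s), f (aff (0, 1/2) (1/2, 0) (0, 1/2) (s, t)))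
        = (fun s => 2 * ∫ t in (1/2)..(1 - s), f (s, t)) (s * (1/2)) := by
      intro s
      have := intervalIntegral.integral_comp_mul_add (a := 0) (b := 1 - s)
        (fun t => f (s * (1/2), t)) (c := 1/2) (by norm_num) (1/2)
      simp only [aff]
      convert this using 2
      · ext t; ring_nf
      · norm_num; congr 1; ring
    simp_rw [this]
    rw [intervalIntegral.integral_comp_mul_right (fun s => 2 * ∫ t in (1/2)..(1 - s), f (s, t))
      (by norm_num : (1/2:ℝ) ≠ 0), intervalIntegral.integral_const_mul]
    norm_num
    ring
  have e4 : (∫ s in (0:ℝ)..1, ∫ t in (0:ℝ)..(1 - s),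
        f (aff (1/2, 1/2) (-1/2, 0) (0, -1/2) (s, t)))
      = 4 * ∫ s in (0:ℝ)..(1/2), ∫ t in (1/2 - s)..(1/2), f (s, t) := by
    have : ∀ s : ℝ, (∫ t in (0:ℝ)..(1 - s), f (aff (1/2, 1/2) (-1/2, 0) (0, -1/2) (s, t)))
        = (fun s => 2 * ∫ t in (1/2 - s)..(1/2), f (s, t)) ((-1/2) * s + 1/2) := by
      intro s
      have := intervalIntegral.integral_comp_mul_add (a := 0) (b := 1 - s)
        (fun t => f ((-1/2) * s + 1/2, t)) (c := -1/2) (by norm_num) (1/2)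
      have e : ∀ t : ℝ, f (aff (1/2, 1/2) (-1/2, 0) (0, -1/2) (s, t))
          = f ((-1/2) * s + 1/2, (-1/2) * t + 1/2) := fun t => by
        simp only [aff]; ring_nf
      simp_rw [e]
      rw [this, intervalIntegral.integral_symm]
      have e' : (-1/2 : ℝ) * (1 - s) + 1/2 = 1/2 - ((-1/2) * s + 1/2) := by ring
      rw [e']
      norm_num
    simp_rw [this]
    rw [intervalIntegral.integral_comp_mul_add
      (fun s => 2 * ∫ t in (1/2 - s)..(1/2), f (s, t))
      (by norm_num : (-1/2:ℝ) ≠ 0), intervalIntegral.integral_const_mul,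
      intervalIntegral.integral_symm]
    norm_num
    ring
  rw [e1, e2, e3, e4, ← intervalIntegral.integral_add_adjacent_intervals
    (c0.intervalIntegrable 0 (1/2)) (c0.intervalIntegrable (1/2) 1)]
  have c12 : Continuous fun s => (∫ t in (0:ℝ)..(1/2 - s), f (s, t))
      + ∫ t in (1/2 - s)..(1/2), f (s, t) := c1.add c2
  have : (∫ s in (0:ℝ)..(1/2), ∫ t in (0:ℝ)..(1 - s), f (s, t)) =
      (∫ s in (0:ℝ)..(1/2), ∫ t in (0:ℝ)..(1/2 - s), f (s, t))
      + (∫ s in (0:ℝ)..(1/2), ∫ t in (1/2 - s)..(1/2), f (s, t))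
      + (∫ s in (0:ℝ)..(1/2), ∫ t in (1/2)..(1 - s), f (s, t)) := by
    rw [← intervalIntegral.integral_add (c1.intervalIntegrable _ _) (c2.intervalIntegrable _ _),
      ← intervalIntegral.integral_add (c12.intervalIntegrable _ _)
        (c3.intervalIntegrable _ _)]
    congr 1
    ext s
    rw [intervalIntegral.integral_add_adjacent_intervals (ci _ _ _) (ci _ _ _),
      intervalIntegral.integral_add_adjacent_intervals (ci _ _ _) (ci _ _ _)]
  rw [this]
  ring

/-! ### Jets and affine changes of variables -/

/-- A twice continuously differentiable function on the plane, together with its first and second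
partial derivatives. -/
structure Jet where
  f : Pt → ℝ
  f1 : Pt → ℝ
  f2 : Pt → ℝ
  f11 : Pt → ℝ
  f12 : Pt → ℝ
  f22 : Pt → ℝ
  d0 : ∀ p, HasFDerivAt f (L (f1 p) (f2 p)) p
  d1 : ∀ p, HasFDerivAt f1 (L (f11 p) (f12 p)) p
  d2 : ∀ p, HasFDerivAt f2 (L (f12 p) (f22 p)) p
  c11 : Continuous f11
  c12 : Continuous f12
  c22 : Continuous f22

namespace Jet

lemma c0 (F : Jet) : Continuous F.f := cont_of_hasFDeriv F.d0
lemma c1 (F : Jet) : Continuous F.f1 := cont_of_hasFDeriv F.d1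
lemma c2 (F : Jet) : Continuous F.f2 := cont_of_hasFDeriv F.d2

end Jet

lemma hasFDerivAt_comb {f g : Pt → ℝ} {a b c d : ℝ} {p : Pt} (x y : ℝ)
    (hf : HasFDerivAt f (L a b) p) (hg : HasFDerivAt g (L c d) p) :
    HasFDerivAt (fun p => x * f p + y * g p) (L (x * a + y * c) (x * b + y * d)) p := by
  refine ((hf.const_mul x).add (hg.const_mul y)).congr_fderiv ?_
  ext <;> simp

lemma hasFDerivAt_mul {f g : Pt → ℝ} {a b c d : ℝ} {p : Pt}
    (hf : HasFDerivAt f (L a b) p) (hg : HasFDerivAt g (L c d) p) :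
    HasFDerivAt (fun p => f p * g p) (L (f p * c + a * g p) (f p * d + b * g p)) p := by
  refine (hf.mul hg).congr_fderiv ?_
  ext <;> simp <;> ring

lemma J_comb {f g : Pt → ℝ} (hf : Continuous f) (hg : Continuous g) (x y : ℝ) :
    J (fun p => x * f p + y * g p) = x * J f + y * J g := by
  rw [← J_mul, ← J_mul]
  exact J_add (continuous_const.mul hf) (continuous_const.mul hg)

/-- The homothety `p ↦ o + c p`. -/
def hom (o : Pt) (c : ℝ) (p : Pt) : Pt := (o.1 + c * p.1, o.2 + c * p.2)

lemma continuous_hom (o : Pt) (c : ℝ) : Continuous (hom o c) := by unfold hom; fun_prop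

lemma hasFDerivAt_hom {f f1 f2 : Pt → ℝ} (h : ∀ p, HasFDerivAt f (L (f1 p) (f2 p)) p)
    (o : Pt) (c x : ℝ) (p : Pt) :
    HasFDerivAt (fun p => x * f (hom o c p)) (L (x * c * f1 (hom o c p)) (x * c * f2 (hom o c p)))
      p := by
  have hs : HasFDerivAt (hom o c) ((L c 0).prod (L 0 c)) p := by
    refine HasFDerivAt.prodMk ?_ ?_
    · have := (hasFDerivAt_fst (𝕜 := ℝ) (p := p)).const_mul c |>.const_add o.1
      refine this.congr_fderiv ?_
      ext <;> simp
    · have := (hasFDerivAt_snd (𝕜 := ℝ) (p := p)).const_mul c |>.const_add o.2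
      refine this.congr_fderiv ?_
      ext <;> simp
  have := ((h (hom o c p)).comp p hs).const_mul x
  refine this.congr_fderiv ?_
  ext <;> simp <;> ring

namespace Jet

/-- The linear combination `x F + y G`. -/
def comb (x y : ℝ) (F G : Jet) : Jet where
  f p := x * F.f p + y * G.f p
  f1 p := x * F.f1 p + y * G.f1 p
  f2 p := x * F.f2 p + y * G.f2 p
  f11 p := x * F.f11 p + y * G.f11 p
  f12 p := x * F.f12 p + y * G.f12 p
  f22 p := x * F.f22 p + y * G.f22 p
  d0 p := hasFDerivAt_comb x y (F.d0 p) (G.d0 p)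
  d1 p := hasFDerivAt_comb x y (F.d1 p) (G.d1 p)
  d2 p := hasFDerivAt_comb x y (F.d2 p) (G.d2 p)
  c11 := (continuous_const.mul F.c11).add (continuous_const.mul G.c11)
  c12 := (continuous_const.mul F.c12).add (continuous_const.mul G.c12)
  c22 := (continuous_const.mul F.c22).add (continuous_const.mul G.c22)

/-- Composition with the homothety `p ↦ o + c p`. -/
def zoom (o : Pt) (c : ℝ) (F : Jet) : Jet where
  f p := 1 * F.f (hom o c p)
  f1 p := 1 * c * F.f1 (hom o c p)
  f2 p := 1 * c * F.f2 (hom o c p)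
  f11 p := 1 * c * c * F.f11 (hom o c p)
  f12 p := 1 * c * c * F.f12 (hom o c p)
  f22 p := 1 * c * c * F.f22 (hom o c p)
  d0 p := hasFDerivAt_hom F.d0 o c 1 p
  d1 p := hasFDerivAt_hom F.d1 o c (1 * c) p
  d2 p := hasFDerivAt_hom F.d2 o c (1 * c) p
  c11 := continuous_const.mul (F.c11.comp (continuous_hom o c))
  c12 := continuous_const.mul (F.c12.comp (continuous_hom o c))
  c22 := continuous_const.mul (F.c22.comp (continuous_hom o c))

end Jet

/-- The function space of the theorem on the reference triangle: functions vanishing at the three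
vertices, with a Hessian of mean zero. For functions vanishing at the vertices, the latter
condition says that the gradient has mean zero on each edge. -/
structure InV (w : Jet) : Prop where
  v00 : w.f (0, 0) = 0
  v10 : w.f (1, 0) = 0
  v01 : w.f (0, 1) = 0
  m11 : J w.f11 = 0
  m12 : J w.f12 = 0
  m22 : J w.f22 = 0

lemma InV.comb {F G : Jet} (hF : InV F) (hG : InV G) (x y : ℝ) : InV (Jet.comb x y F G) := by
  have key : ∀ f g : Pt → ℝ, Continuous f → Continuous g → J f = 0 → J g = 0 →
      J (fun p => x * f p + y * g p) = 0 := by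
    intro f g hf hg h1 h2
    rw [J_comb hf hg, h1, h2]
    ring
  exact ⟨by simp [Jet.comb, hF.v00, hG.v00], by simp [Jet.comb, hF.v10, hG.v10],
    by simp [Jet.comb, hF.v01, hG.v01],
    key _ _ F.c11 G.c11 hF.m11 hG.m11, key _ _ F.c12 G.c12 hF.m12 hG.m12,
    key _ _ F.c22 G.c22 hF.m22 hG.m22⟩

section Edge
variable {f f1 f2 : Pt → ℝ}

/-- Fundamental theorem of calculus along the edge from `(0,0)` to `(0,1)`. -/
lemma ftc_left (h : ∀ p, HasFDerivAt f (L (f1 p) (f2 p)) p) (hc : Continuous f2) :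
    ∫ t in (0:ℝ)..1, f2 (0, t) = f (0, 1) - f (0, 0) :=
  intervalIntegral.integral_eq_sub_of_hasDerivAt (f := fun t => f (0, t))
    (fun t _ => by simpa using hasDerivAt_curve h (hasDerivAt_const t (0:ℝ)) (hasDerivAt_id t))
    ((hc.comp (by fun_prop : Continuous fun t : ℝ => ((0:ℝ), t))).intervalIntegrable _ _)

/-- Fundamental theorem of calculus along the edge from `(0,0)` to `(1,0)`. -/
lemma ftc_bot (h : ∀ p, HasFDerivAt f (L (f1 p) (f2 p)) p) (hc : Continuous f1) :
    ∫ s in (0:ℝ)..1, f1 (s, 0) = f (1, 0) - f (0, 0) :=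
  intervalIntegral.integral_eq_sub_of_hasDerivAt (f := fun s => f (s, 0))
    (fun t _ => by simpa using hasDerivAt_curve h (hasDerivAt_id t) (hasDerivAt_const t (0:ℝ)))
    ((hc.comp (by fun_prop : Continuous fun t : ℝ => (t, (0:ℝ)))).intervalIntegrable _ _)

/-- Fundamental theorem of calculus along the edge from `(1,0)` to `(0,1)`. -/
lemma ftc_hyp (h : ∀ p, HasFDerivAt f (L (f1 p) (f2 p)) p) (h1 : Continuous f1)
    (h2 : Continuous f2) :
    ∫ t in (0:ℝ)..1, (f2 (1 - t, t) - f1 (1 - t, t)) = f (0, 1) - f (1, 0) := by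
  have := intervalIntegral.integral_eq_sub_of_hasDerivAt (a := 0) (b := 1)
    (f := fun t : ℝ => f (1 - t, t)) (f' := fun t => f2 (1 - t, t) - f1 (1 - t, t))
    (fun t _ => (hasDerivAt_curve h ((hasDerivAt_id t).const_sub 1) (hasDerivAt_id t)).congr_deriv
      (by simp only [id]; ring))
    (((h2.comp (by fun_prop : Continuous fun t : ℝ => (1 - t, t))).sub
      (h1.comp (by fun_prop : Continuous fun t : ℝ => (1 - t, t)))).intervalIntegrable _ _)
  simpa using this

lemma hyp_flip (g : Pt → ℝ) :
    ∫ s in (0:ℝ)..1, g (s, 1 - s) = ∫ t in (0:ℝ)..1, g (1 - t, t) := by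
  have := intervalIntegral.integral_comp_sub_left (a := 0) (b := 1) (fun s => g (s, 1 - s)) (1:ℝ)
  simp only [sub_sub_cancel, sub_self, sub_zero] at this
  exact this.symm

end Edge

namespace Jet

/-- Mean of the first partial derivative on the edge from `(0,0)` to `(0,1)`. -/
def X (F : Jet) : ℝ := ∫ t in (0:ℝ)..1, F.f1 (0, t)

/-- Mean of the second partial derivative on the edge from `(0,0)` to `(1,0)`. -/
def Y (F : Jet) : ℝ := ∫ s in (0:ℝ)..1, F.f2 (s, 0)

/-- Mean of the first partial derivative on the edge from `(1,0)` to `(0,1)`. -/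
def G (F : Jet) : ℝ := ∫ t in (0:ℝ)..1, F.f1 (1 - t, t)

lemma ii (F : Pt → ℝ) (h : Continuous F) (x y : ℝ → ℝ) (hx : Continuous x) (hy : Continuous y) :
    IntervalIntegrable (fun t => F (x t, y t)) volume 0 1 :=
  (h.comp (by fun_prop : Continuous fun t : ℝ => (x t, y t))).intervalIntegrable _ _

lemma J11 (F : Jet) : J F.f11 = F.G - F.X := by
  rw [J_d1 F.d1 F.c11, intervalIntegral.integral_sub
    (ii _ F.c1 _ _ (by fun_prop) (by fun_prop)) (ii _ F.c1 _ _ (by fun_prop) (by fun_prop))]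
  rfl

lemma J12 (F : Jet) : J F.f12 = F.G - (F.f (1, 0) - F.f (0, 0)) := by
  rw [J_d2 F.d1 F.c12, intervalIntegral.integral_sub
    (ii _ F.c1 _ _ (by fun_prop) (by fun_prop)) (ii _ F.c1 _ _ (by fun_prop) (by fun_prop)),
    hyp_flip, ftc_bot F.d0 F.c1]
  rfl

lemma J22 (F : Jet) : J F.f22 = F.G + (F.f (0, 1) - F.f (1, 0)) - F.Y := by
  have h := ftc_hyp F.d0 F.c1 F.c2
  rw [intervalIntegral.integral_sub
    (ii _ F.c2 _ _ (by fun_prop) (by fun_prop)) (ii _ F.c1 _ _ (by fun_prop) (by fun_prop))] at h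
  rw [J_d2 F.d2 F.c22, intervalIntegral.integral_sub
    (ii _ F.c2 _ _ (by fun_prop) (by fun_prop)) (ii _ F.c2 _ _ (by fun_prop) (by fun_prop)),
    hyp_flip, Y, G, ← h]
  ring

end Jet

lemma InV.edges {w : Jet} (h : InV w) : w.X = 0 ∧ w.Y = 0 ∧ w.G = 0 := by
  have h1 := w.J11
  have h2 := w.J12
  have h3 := w.J22
  rw [h.m11] at h1
  rw [h.m12, h.v10, h.v00] at h2
  rw [h.m22, h.v01, h.v10] at h3
  refine ⟨by linarith, by linarith, by linarith⟩

/-! ### Exact integration of polynomials -/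

lemma beta_swap (a b : ℕ) : ∫ s in (0:ℝ)..1, s ^ a * (1 - s) ^ b
    = ∫ s in (0:ℝ)..1, s ^ b * (1 - s) ^ a := by
  have := hyp_flip (fun p : Pt => p.1 ^ a * p.2 ^ b)
  simp only at this
  rw [this]
  congr 1; ext; ring

lemma hasFDerivAt_mono (c : ℝ) (a b : ℕ) (p : Pt) :
    HasFDerivAt (fun p : Pt => c * p.1 ^ a * p.2 ^ b)
      (L (c * a * p.1 ^ (a - 1) * p.2 ^ b) (c * b * p.1 ^ a * p.2 ^ (b - 1))) p := by
  have h1 := (hasFDerivAt_fst (𝕜 := ℝ) (p := p)).pow a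
  have h2 := (hasFDerivAt_snd (𝕜 := ℝ) (p := p)).pow b
  refine ((h1.const_mul c).mul h2).congr_fderiv ?_
  ext <;> simp <;> ring

lemma J_mono_beta2 (a b : ℕ) : (b + 1) * J (fun p => p.1 ^ a * p.2 ^ b)
    = ∫ s in (0:ℝ)..1, s ^ a * (1 - s) ^ (b + 1) := by
  have := J_d2 (hasFDerivAt_mono 1 a (b + 1)) (by fun_prop)
  rw [← J_mul]
  simpa [mul_assoc, mul_comm, mul_left_comm] using this

lemma J_mono_beta1 (a b : ℕ) : (a + 1) * J (fun p => p.1 ^ a * p.2 ^ b)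
    = ∫ s in (0:ℝ)..1, s ^ (a + 1) * (1 - s) ^ b := by
  have := J_d1 (hasFDerivAt_mono 1 (a + 1) b) (by fun_prop)
  rw [← J_mul, beta_swap]
  simpa [mul_assoc, mul_comm, mul_left_comm] using this

lemma beta_nat (b a : ℕ) : ∫ s in (0:ℝ)..1, s ^ a * (1 - s) ^ b
    = (a.factorial * b.factorial : ℝ) / (a + b + 1).factorial := by
  induction b generalizing a with
  | zero =>
    have h : (a.factorial : ℝ) ≠ 0 := by positivity
    have h' : (a : ℝ) + 1 ≠ 0 := by positivity
    simp [Nat.factorial_succ]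
    field_simp
  | succ b ih =>
    have h1 := J_mono_beta1 a b
    have h2 := J_mono_beta2 a b
    rw [ih (a + 1)] at h1
    rw [← h2]
    have h : ((a:ℝ) + 1) ≠ 0 := by positivity
    have e : a + 1 + b + 1 = a + (b + 1) + 1 := by ring
    rw [e] at h1
    have h4 : (((a + (b + 1) + 1).factorial : ℕ) : ℝ) ≠ 0 := by positivity
    rw [eq_div_iff h4] at h1 ⊢
    rw [Nat.factorial_succ a] at h1
    rw [Nat.factorial_succ b]
    push_cast at h1 ⊢
    have : ((a:ℝ) + 1) * (((b:ℝ) + 1) * J (fun p => p.1 ^ a * p.2 ^ b)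
        * (a + (b + 1) + 1).factorial) = (a + 1) * (a.factorial * ((b + 1) * b.factorial)) := by
      linear_combination ((b:ℝ) + 1) * h1
    exact mul_left_cancel₀ h this

lemma J_monomial (a b : ℕ) : J (fun p => p.1 ^ a * p.2 ^ b)
    = (a.factorial * b.factorial : ℝ) / (a + b + 2).factorial := by
  have h := J_mono_beta2 a b
  rw [beta_nat] at h
  have e : a + (b + 1) + 1 = a + b + 2 := by ring
  rw [e, Nat.factorial_succ b, mul_div_assoc] at h
  have h' : ((b:ℝ) + 1) ≠ 0 := by positivity
  apply mul_left_cancel₀ h'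
  rw [h]
  push_cast
  ring

/-- Polynomials in two variables with rational coefficients: `(c, a, b)` is `c s ^ a t ^ b`. -/
abbrev Poly := List (ℚ × ℕ × ℕ)

namespace Poly

/-- Value of a polynomial at a point. -/
def ev : Poly → Pt → ℝ
  | [], _ => 0
  | (c, a, b) :: l, p => c * p.1 ^ a * p.2 ^ b + ev l p

/-- Derivative with respect to the first variable. -/
def ds : Poly → Poly
  | [] => []
  | (c, a, b) :: l => (c * a, a - 1, b) :: ds l

/-- Derivative with respect to the second variable. -/
def dt : Poly → Poly
  | [] => []
  | (c, a, b) :: l => (c * b, a, b - 1) :: dt l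

/-- Integral of a polynomial over the reference triangle. -/
def int : Poly → ℚ
  | [] => 0
  | (c, a, b) :: l => c * ((a.factorial * b.factorial : ℕ) / (a + b + 2).factorial) + int l

/-- Product with the monomial `c s ^ a t ^ b`. -/
def mul1 (c : ℚ) (a b : ℕ) : Poly → Poly
  | [] => []
  | (c', a', b') :: l => (c * c', a + a', b + b') :: mul1 c a b l

/-- Product. -/
def mul : Poly → Poly → Poly
  | [], _ => []
  | (c, a, b) :: l, m => mul1 c a b m ++ mul l m

/-- Product with a constant. -/
def smul (x : ℚ) (l : Poly) : Poly := mul1 x 0 0 l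

lemma ev_append (l m : Poly) (p : Pt) : ev (l ++ m) p = ev l p + ev m p := by
  induction l with
  | nil => simp [ev]
  | cons x l ih => obtain ⟨c, a, b⟩ := x; simp [ev, ih, add_assoc]

lemma ev_mul1 (c : ℚ) (a b : ℕ) (l : Poly) (p : Pt) :
    ev (mul1 c a b l) p = c * p.1 ^ a * p.2 ^ b * ev l p := by
  induction l with
  | nil => simp [ev, mul1]
  | cons x l ih => obtain ⟨c, a, b⟩ := x; simp only [ev, mul1, ih]; push_cast; ring

lemma ev_smul (c : ℚ) (l : Poly) (p : Pt) : ev (smul c l) p = c * ev l p := by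
  simp [smul, ev_mul1]

lemma ev_mul (l m : Poly) (p : Pt) : ev (mul l m) p = ev l p * ev m p := by
  induction l with
  | nil => simp [ev, mul]
  | cons x l ih => obtain ⟨c, a, b⟩ := x; simp only [ev, mul, ev_append, ev_mul1, ih]; ring

lemma hasFDerivAt_ev (l : Poly) (p : Pt) :
    HasFDerivAt (ev l) (L (ev (ds l) p) (ev (dt l) p)) p := by
  induction l with
  | nil =>
    refine (hasFDerivAt_const (0:ℝ) p).congr_fderiv ?_
    ext <;> simp [ev, ds, dt]
  | cons x l ih =>
    obtain ⟨c, a, b⟩ := x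
    refine ((hasFDerivAt_mono c a b p).add ih).congr_fderiv ?_
    ext <;> simp [ev, ds, dt]

lemma continuous_ev (l : Poly) : Continuous (ev l) := cont_of_hasFDeriv (hasFDerivAt_ev l)

lemma J_ev (l : Poly) : J (ev l) = int l := by
  induction l with
  | nil => simp [J, ev, int]
  | cons x l ih =>
    obtain ⟨c, a, b⟩ := x
    have : J (ev ((c, a, b) :: l)) = J (fun p => c * (p.1 ^ a * p.2 ^ b)) + J (ev l) := by
      rw [← J_add (by fun_prop) (continuous_ev l)]
      congr 1; ext p; simp [ev, mul_assoc]
    rw [this, J_mul, J_monomial, ih]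
    simp [int]

lemma ds_dt (l : Poly) : ds (dt l) = dt (ds l) := by
  induction l with
  | nil => rfl
  | cons x l ih =>
    obtain ⟨c, a, b⟩ := x
    simp only [ds, dt, ih]
    congr 2
    ring

/-- The polynomial function as a jet. -/
def jet (l : Poly) : Jet where
  f := ev l
  f1 := ev (ds l)
  f2 := ev (dt l)
  f11 := ev (ds (ds l))
  f12 := ev (dt (ds l))
  f22 := ev (dt (dt l))
  d0 := hasFDerivAt_ev l
  d1 := hasFDerivAt_ev _
  d2 p := by rw [← ds_dt]; exact hasFDerivAt_ev _ p
  c11 := continuous_ev _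
  c12 := continuous_ev _
  c22 := continuous_ev _

end Poly

/-! ### Discrete energy inequalities on four subtriangles -/

/-- A quadratic form on Hessians `(p, q, r) = (f_ss, f_st, f_tt)`, diagonal in the three components
of the Hessian with respect to the first edge `a` and the doubled median `2b - a`. -/
def Qf (A β γ p q r : ℝ) : ℝ := A * p ^ 2 + β * (2 * q - p) ^ 2 + γ * (4 * r - 4 * q + p) ^ 2

/-- Squared `L²` norm on the reference triangle of the quadratic polynomial with values `v0`, `v1`,
`v2` at the vertices and mean Hessian `(P, S, R)`. -/
def qsq (v0 v1 v2 P S R : ℝ) : ℝ :=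
  v0 ^ 2 / 2 + (v1 - v0 - P) ^ 2 / 12 + (v2 - v0 - R) ^ 2 / 12 + P ^ 2 / 30 + S ^ 2 / 45
    + R ^ 2 / 30 + v0 * (v1 - v0 - P) / 3 + v0 * (v2 - v0 - R) / 3 + v0 * P / 6 + v0 * S / 6
    + v0 * R / 6 + (v1 - v0 - P) * (v2 - v0 - R) / 12 + (v1 - v0 - P) * P / 10
    + (v1 - v0 - P) * S / 15 + (v1 - v0 - P) * R / 30 + (v2 - v0 - R) * P / 30
    + (v2 - v0 - R) * S / 15 + (v2 - v0 - R) * R / 10 + P * S / 30 + P * R / 90 + S * R / 30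

/-- The comparison of `L²` norm and energy for piecewise quadratic functions on the four triangles
cut out by the midlines; `mᵢ` are the values at the midpoints, the other variables are means of
first derivatives on half edges and midlines. -/
def Disc (A β γ μ m1 m2 m3 X1 Y1 G1 X2 Y3 G2 : ℝ) : Prop :=
  (1 / 4) * (qsq 0 m1 m2 (G1 - X1) (G1 - m1) (G1 + (m2 - m1) - Y1)
    + qsq m1 0 m3 (G2 - X2) (G2 - (0 - m1)) (G2 + (m3 - 0) + Y1)
    + qsq m2 m3 0 (-G2 + X1) (-G2 - (m3 - m2)) (-G2 + (0 - m3) - Y3)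
    + qsq m3 m2 m1 (-G1 + X2) (-G1 - (m2 - m3)) (-G1 + (m1 - m2) + Y3))
  ≤ μ * (8 * (Qf A β γ (G1 - X1) (G1 - m1) (G1 + (m2 - m1) - Y1)
    + Qf A β γ (G2 - X2) (G2 - (0 - m1)) (G2 + (m3 - 0) + Y1)
    + Qf A β γ (-G2 + X1) (-G2 - (m3 - m2)) (-G2 + (0 - m3) - Y3)
    + Qf A β γ (-G1 + X2) (-G1 - (m2 - m3)) (-G1 + (m1 - m2) + Y3)))

/-- The discrete inequality behind the crude constant; `LDLᵀ` certificate. -/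
lemma disc_iso (m1 m2 m3 X1 Y1 G1 X2 Y3 G2 : ℝ) :
    Disc (1) (2/3) (1/9) (7/825) m1 m2 m3 X1 Y1 G1 X2 Y3 G2 := by
  have key : 0 ≤ 3221/5940 * (m1 - 99/6442 * m2 - 7663/16105 * m3 - 23319/128840 * X1 - 13841/64420 * Y1 - 13841/64420 * G1 + 6805/25768 * X2 + 14831/64420 * Y3 + 2122/16105 * G2) ^ 2
      + 41489563/76530960 * (m2 - 154927062/207447815 * m3 - 221497631/829791260 * X1 - 96911561/414895630 * Y1 + 13841/65410 * G1 + 153589473/829791260 * X2 + 90631991/414895630 * Y3 - 4244/32705 * G2) ^ 2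
      + 80177295203/684577789500 * (m3 - 310131249983/641418361624 * X1 - 68913251495/320709180812 * Y1 - 28211837216/80177295203 * G1 - 684389183/641418361624 * X2 + 85810178905/320709180812 * Y3 + 268255168447/320709180812 * G2) ^ 2
      + 12635905495121201/84667223734368000 * (X1 - 3417211166592694/12635905495121201 * Y1 - 3140066146219280/12635905495121201 * G1 + 4457163524180049/12635905495121201 * X2 + 3612076216571194/12635905495121201 * Y3 + 1255026481023070/12635905495121201 * G2) ^ 2
      + 12165303864528290159/75057278641019933940 * (Y1 - 131553545541511500077/486612154581131606360 * G1 + 12525620455675843929/48661215458113160636 * X2 + 27304115323118802988/60826519322641450795 * Y3 + 152137079152596055319/486612154581131606360 * G2) ^ 2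
      + 1903141467465829871541119/12846560880941874407904000 * (G1 + 91923113162930694137090/1903141467465829871541119 * X2 + 210227226607442276541352/1903141467465829871541119 * Y3 + 1054581282797324627450307/1903141467465829871541119 * G2) ^ 2
      + 559402538077568283126319/3806282934931659743082238 * (X2 - 110765850354352599263487/259528802988327756827900 * Y3 - 96551550187210300102363/259528802988327756827900 * G2) ^ 2
      + 55146806949724180119730379/570963366574321065021380000 * (Y3 - 508705965604139/819109058828989 * G2) ^ 2
      + 5465404872669469/450509982355943950 * (G2) ^ 2 := by
    positivity
  unfold Disc qsq Qf
  linear_combination key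

/-- The discrete inequality on the hyperplane `m1 + m2 + m3 = 0`. -/
lemma disc_iso_defl (m1 m2 m3 X1 Y1 G1 X2 Y3 G2 : ℝ) (h : m1 + m2 + m3 = 0) :
    Disc (1) (2/3) (1/9) (1/720) m1 m2 m3 X1 Y1 G1 X2 Y3 G2 := by
  have key : 0 ≤ 1681/1620 * (m1 + 3213/3362 * m2 + 1529/1681 * m3 - 291/13448 * X1 - 101/6724 * Y1 - 101/6724 * G1 + 221/13448 * X2 + 155/6724 * Y3 + 34/1681 * G2) ^ 2
      + 195935/2178576 * (m2 - 318/195935 * m3 + 191981/3918700 * X1 - 196597/1959350 * Y1 + 101/298 * G1 + 268269/3918700 * X2 - 158453/1959350 * Y3 - 68/149 * G2) ^ 2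
      + 3791413/21160980 * (m3 + 36298903/151656520 * X1 + 16117119/75828260 * Y1 - 143072/3791413 * G1 - 27554153/151656520 * X2 - 15809409/75828260 * Y3 - 302187/15165652 * G2) ^ 2
      + 13238601109/655156166400 * (X1 - 4942543214/13238601109 * Y1 - 1099612816/13238601109 * G1 + 5148811701/13238601109 * X2 + 5469762818/13238601109 * Y3 + 1214295446/13238601109 * G2) ^ 2
      + 2050552035619/107232668982900 * (Y1 + 1860510561559/16404416284952 * G1 + 3972331233465/8202208142476 * X2 + 1145911600504/2050552035619 * Y3 - 760318946869/16404416284952 * G2) ^ 2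
      + 1415005069655981/70867078350992640 * (G1 - 348854064807130/1415005069655981 * X2 - 40380688195784/1415005069655981 * Y3 + 1016678870016441/1415005069655981 * G2) ^ 2
      + 670770215503379/42450152089679430 * (X2 - 115065997370477/131954796492468 * Y3 + 30026338139519/131954796492468 * G2) ^ 2
      + 7526580009635/9500745347457696 * (Y3 + 3196286893/13126229525 * G2) ^ 2
      + 662945011/1181360657250 * (G2) ^ 2 := by
    positivity
  have h2 : 1 * (m1 + m2 + m3) ^ 2 = 0 := by rw [h]; norm_num
  unfold Disc qsq Qf
  linear_combination key + h2

/-- The discrete inequality on the hyperplane `m1 + m2 + m3 = 0`, for the anisotropic form. -/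
lemma disc_aniso_defl (m1 m2 m3 X1 Y1 G1 X2 Y3 G2 : ℝ) (h : m1 + m2 + m3 = 0) :
    Disc (37/16) (23/24) (1/16) (1/660) m1 m2 m3 X1 Y1 G1 X2 Y3 G2 := by
  have key : 0 ≤ 697/660 * (m1 + 77/82 * m2 + 633/697 * m3 - 163/5576 * X1 - 21/2788 * Y1 - 175/8364 * G1 + 343/16728 * X2 + 43/2788 * Y3 + 62/2091 * G2) ^ 2
      + 901/7216 * (m2 - 234/901 * m3 + 9527/162180 * X1 - 1909/27030 * Y1 + 35/102 * G1 + 13687/162180 * X2 - 1589/27030 * Y3 - 124/255 * G2) ^ 2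
      + 21005/118932 * (m3 + 289303/840200 * X1 + 50479/420100 * Y1 - 212/315075 * G1 - 550651/2520600 * X2 - 58641/420100 * Y3 - 157781/1260300 * G2) ^ 2
      + 102223447429/2036241504000 * (X1 - 15197795886/102223447429 * Y1 - 34252293936/102223447429 * G1 + 27080276069/102223447429 * X2 + 20032489794/102223447429 * Y3 - 3266301162/102223447429 * G2) ^ 2
      + 3901893116027/337337376515700 * (Y1 + 6596775108661/93645434784648 * G1 + 32232882397915/46822717392324 * X2 + 1359209643392/3901893116027 * Y3 - 5602136197157/31215144928216 * G2) ^ 2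
      + 25521919419564677/494447895662941440 * (G1 - 19273003568441054/76565758258694031 * X2 + 3113740926079864/25521919419564677 * Y3 + 31273742005977107/76565758258694031 * G2) ^ 2
      + 11469490205000177483/227400302028321272070 * (X2 - 1213268706086275173/6553994402857244276 * Y3 - 894883163328036569/6553994402857244276 * G2) ^ 2
      + 936988043241965225/157295865668573862624 * (Y3 - 102729926041016091/58896391289494957 * G2) ^ 2
      + 43358264142961775/3887161825106667162 * (G2) ^ 2 := by
    positivity
  have h2 : 1 * (m1 + m2 + m3) ^ 2 = 0 := by rw [h]; norm_num
  unfold Disc qsq Qf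
  linear_combination key + h2

/-! ### Splitting off the Morley interpolant and subdividing -/

/-- Energy of a jet. -/
def En (A β γ : ℝ) (F : Jet) : ℝ := J fun p => Qf A β γ (F.f11 p) (F.f12 p) (F.f22 p)

/-- Squared `L²` norm. -/
def N2 (F : Jet) : ℝ := J fun p => F.f p ^ 2

lemma continuous_Qf (A β γ : ℝ) {a b c : Pt → ℝ} (ha : Continuous a) (hb : Continuous b)
    (hc : Continuous c) : Continuous fun p => Qf A β γ (a p) (b p) (c p) := by
  unfold Qf; fun_prop

lemma Qf_nonneg {A β γ : ℝ} (hA : 0 ≤ A) (hβ : 0 ≤ β) (hγ : 0 ≤ γ) (p q r : ℝ) :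
    0 ≤ Qf A β γ p q r := by unfold Qf; positivity

lemma J_const (c : ℝ) : J (fun _ => c) = c / 2 := by
  have := J_monomial 0 0
  simp only [pow_zero, mul_one] at this
  have h : J (fun _ => c) = J (fun _ => c * 1) := by simp
  rw [h, J_mul, this]
  norm_num [Nat.factorial]
  ring

/-- The quadratic polynomial with vertex values `v0`, `v1`, `v2` and mean Hessian `(P, S, R)`. -/
def quad (v0 v1 v2 P S R : ℝ) : Jet where
  f p := v0 + (v1 - v0 - P) * p.1 + (v2 - v0 - R) * p.2 + P * p.1 ^ 2 + 2 * S * p.1 * p.2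
    + R * p.2 ^ 2
  f1 p := (v1 - v0 - P) + 2 * P * p.1 + 2 * S * p.2
  f2 p := (v2 - v0 - R) + 2 * S * p.1 + 2 * R * p.2
  f11 _ := 2 * P
  f12 _ := 2 * S
  f22 _ := 2 * R
  d0 p := by
    have h1 := hasFDerivAt_mono (v1 - v0 - P) 1 0 p
    have h2 := hasFDerivAt_mono (v2 - v0 - R) 0 1 p
    have h3 := hasFDerivAt_mono P 2 0 p
    have h4 := hasFDerivAt_mono (2 * S) 1 1 p
    have h5 := hasFDerivAt_mono R 0 2 p
    have := ((((h1.const_add v0).add h2).add h3).add h4).add h5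
    refine (this.congr_of_eventuallyEq ?_).congr_fderiv ?_
    · filter_upwards with x
      simp
    · ext <;> simp <;> ring_nf <;> simp
  d1 p := by
    have h1 := hasFDerivAt_mono (2 * P) 1 0 p
    have h2 := hasFDerivAt_mono (2 * S) 0 1 p
    refine (((h1.const_add (v1 - v0 - P)).add h2).congr_of_eventuallyEq ?_).congr_fderiv ?_
    · filter_upwards with x
      simp
    · ext <;> simp
  d2 p := by
    have h1 := hasFDerivAt_mono (2 * S) 1 0 p
    have h2 := hasFDerivAt_mono (2 * R) 0 1 p
    refine (((h1.const_add (v2 - v0 - R)).add h2).congr_of_eventuallyEq ?_).congr_fderiv ?_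
    · filter_upwards with x
      simp
    · ext <;> simp
  c11 := continuous_const
  c12 := continuous_const
  c22 := continuous_const

lemma J_terms (l : List (ℝ × ℕ × ℕ)) :
    Continuous (fun p : Pt => (l.map fun m => m.1 * (p.1 ^ m.2.1 * p.2 ^ m.2.2)).sum) ∧
    J (fun p => (l.map fun m => m.1 * (p.1 ^ m.2.1 * p.2 ^ m.2.2)).sum)
      = (l.map fun m => m.1 *
        ((m.2.1.factorial * m.2.2.factorial : ℝ) / (m.2.1 + m.2.2 + 2).factorial)).sum := by
  induction l with
  | nil => simp [J, continuous_const]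
  | cons x l ih =>
    have hx : Continuous fun p : Pt => x.1 * (p.1 ^ x.2.1 * p.2 ^ x.2.2) := by fun_prop
    simp only [List.map_cons, List.sum_cons]
    exact ⟨hx.add ih.1, by rw [J_add hx ih.1, ih.2, J_mul, J_monomial]⟩

lemma N2_quad (v0 v1 v2 P S R : ℝ) : N2 (quad v0 v1 v2 P S R) = qsq v0 v1 v2 P S R := by
  have h := (J_terms [(v0 ^ 2, 0, 0), (2 * v0 * (v1 - v0 - P), 1, 0), (2 * v0 * (v2 - v0 - R), 0, 1),
    ((v1 - v0 - P) ^ 2 + 2 * v0 * P, 2, 0), (2 * (v1 - v0 - P) * (v2 - v0 - R) + 4 * v0 * S, 1, 1),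
    ((v2 - v0 - R) ^ 2 + 2 * v0 * R, 0, 2), (2 * (v1 - v0 - P) * P, 3, 0),
    (2 * (v2 - v0 - R) * P + 4 * (v1 - v0 - P) * S, 2, 1),
    (2 * (v1 - v0 - P) * R + 4 * (v2 - v0 - R) * S, 1, 2), (2 * (v2 - v0 - R) * R, 0, 3),
    (P ^ 2, 4, 0), (4 * P * S, 3, 1), (4 * S ^ 2 + 2 * P * R, 2, 2), (4 * R * S, 1, 3),
    (R ^ 2, 0, 4)]).2
  have e : N2 (quad v0 v1 v2 P S R) = _ := Eq.trans ?_ h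
  · rw [e]
    simp [Nat.factorial, qsq]
    ring
  · unfold N2 quad
    congr 1
    ext p
    simp only [List.map_cons, List.sum_cons, List.map_nil, List.sum_nil]
    ring

/-- The quadratic polynomial with the same vertex values and the same mean Hessian (the Morley
interpolant). -/
def Jet.q (F : Jet) : Jet :=
  quad (F.f (0, 0)) (F.f (1, 0)) (F.f (0, 1)) (J F.f11) (J F.f12) (J F.f22)

/-- The error of the quadratic interpolant. -/
def Jet.r (F : Jet) : Jet := Jet.comb 1 (-1) F F.q

lemma inV_r (F : Jet) : InV F.r := by
  refine ⟨?_, ?_, ?_, ?_, ?_, ?_⟩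
  · simp only [Jet.r, Jet.comb, Jet.q, quad]; ring
  · simp only [Jet.r, Jet.comb, Jet.q, quad]; ring
  · simp only [Jet.r, Jet.comb, Jet.q, quad]; ring
  · simp only [Jet.r, Jet.comb]
    rw [J_comb F.c11 F.q.c11]
    simp only [Jet.q, quad, J_const]
    ring
  · simp only [Jet.r, Jet.comb]
    rw [J_comb F.c12 F.q.c12]
    simp only [Jet.q, quad, J_const]
    ring
  · simp only [Jet.r, Jet.comb]
    rw [J_comb F.c22 F.q.c22]
    simp only [Jet.q, quad, J_const]
    ring

/-- The mean Hessian is orthogonal to the Hessian of the interpolation error. -/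
lemma En_split (A β γ : ℝ) (F : Jet) :
    En A β γ F = 2 * Qf A β γ (J F.f11) (J F.f12) (J F.f22) + En A β γ F.r := by
  have hr := inV_r F
  set P := J F.f11
  set S := J F.f12
  set R := J F.f22
  have hq : Continuous fun p => Qf A β γ (F.r.f11 p) (F.r.f12 p) (F.r.f22 p) :=
    continuous_Qf _ _ _ F.r.c11 F.r.c12 F.r.c22
  let x := 4 * A * P - 4 * β * (2 * S - P) + 4 * γ * (4 * R - 4 * S + P)
  let y := 8 * β * (2 * S - P) - 16 * γ * (4 * R - 4 * S + P)
  let z := 16 * γ * (4 * R - 4 * S + P)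
  have h1 : En A β γ F = J fun p => 4 * Qf A β γ P S R
      + ((x * F.r.f11 p + (y * F.r.f12 p + z * F.r.f22 p))
      + Qf A β γ (F.r.f11 p) (F.r.f12 p) (F.r.f22 p)) := by
    unfold En
    congr 1
    ext p
    simp only [Jet.r, Jet.comb, Jet.q, quad, Qf, x, y, z]
    ring
  have c1 := F.r.c11
  have c2 := F.r.c12
  have c3 := F.r.c22
  rw [h1, J_add continuous_const (by fun_prop), J_add (by fun_prop) hq,
    J_add (by fun_prop) (by fun_prop), J_add (by fun_prop) (by fun_prop), J_const, J_mul, J_mul,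
    J_mul, hr.m11, hr.m12, hr.m22]
  unfold En
  ring

lemma N2_nonneg (F : Jet) : 0 ≤ N2 F := J_nonneg fun _ => sq_nonneg _

/-- Young's inequality for the splitting into interpolant and error. -/
lemma N2_young (F : Jet) {p k : ℝ} (hp : 0 < p) (hk : 0 < k) :
    N2 F ≤ (p + k) * (N2 F.q / p + N2 F.r / k) := by
  have c1 := F.c0
  have c2 := F.q.c0
  have c3 := F.r.c0
  have e : (p + k) * (N2 F.q / p + N2 F.r / k)
      = J fun x => ((p + k) / p) * F.q.f x ^ 2 + ((p + k) / k) * F.r.f x ^ 2 := by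
    rw [J_comb (by fun_prop) (by fun_prop)]
    unfold N2
    ring
  rw [e]
  refine J_mono (by fun_prop) (by fun_prop) fun x _ => ?_
  have h : F.f x = F.q.f x + F.r.f x := by simp [Jet.r, Jet.comb]
  rw [h]
  have : (p + k) / p * F.q.f x ^ 2 + (p + k) / k * F.r.f x ^ 2 - (F.q.f x + F.r.f x) ^ 2
      = (k * F.q.f x - p * F.r.f x) ^ 2 / (p * k) := by
    field_simp
    ring
  have h2 : 0 ≤ (k * F.q.f x - p * F.r.f x) ^ 2 / (p * k) := by positivity
  linarith

lemma J_hom {f : Pt → ℝ} (hf : Continuous f) :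
    J f = (1 / 4) * (J (fun p => f (hom (0, 0) (1/2) p)) + J (fun p => f (hom (1/2, 0) (1/2) p))
      + J (fun p => f (hom (0, 1/2) (1/2) p)) + J (fun p => f (hom (1/2, 1/2) (-1/2) p))) := by
  rw [J_split hf]
  simp only [hom, aff, mul_zero, add_zero, mul_comm]

namespace Jet
/-- The restriction to the subtriangle at `(0,0)` cut out by the midlines, pulled back to `T`. -/
def z1 (w : Jet) : Jet := w.zoom (0, 0) (1/2)

/-- The restriction to the subtriangle at `(1,0)`, pulled back to `T`. -/
def z2 (w : Jet) : Jet := w.zoom (1/2, 0) (1/2)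

/-- The restriction to the subtriangle at `(0,1)`, pulled back to `T`. -/
def z3 (w : Jet) : Jet := w.zoom (0, 1/2) (1/2)

/-- The restriction to the middle subtriangle, pulled back to `T` by a point reflection. -/
def z4 (w : Jet) : Jet := w.zoom (1/2, 1/2) (-1/2)
end Jet

lemma N2_split (w : Jet) : N2 w = (1 / 4) * (N2 w.z1 + N2 w.z2 + N2 w.z3 + N2 w.z4) := by
  unfold N2
  have := w.c0
  rw [J_hom (by fun_prop)]
  simp [Jet.z1, Jet.z2, Jet.z3, Jet.z4, Jet.zoom]

lemma En_zoom (A β γ : ℝ) (w : Jet) (o : Pt) (c : ℝ) : En A β γ (w.zoom o c) =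
    c ^ 4 * J (fun p => Qf A β γ (w.f11 (hom o c p)) (w.f12 (hom o c p)) (w.f22 (hom o c p))) := by
  rw [← J_mul]
  unfold En Jet.zoom Qf
  congr 1
  ext p
  simp only
  ring

lemma En_four (A β γ : ℝ) (w : Jet) : En A β γ w
    = 4 * (En A β γ w.z1 + En A β γ w.z2 + En A β γ w.z3 + En A β γ w.z4) := by
  unfold Jet.z1 Jet.z2 Jet.z3 Jet.z4
  rw [En_zoom, En_zoom, En_zoom, En_zoom, En, J_hom (continuous_Qf _ _ _ w.c11 w.c12 w.c22)]
  ring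

/-- Means over half edges. -/
lemma half_split {g : ℝ → ℝ} (hg : Continuous g) :
    (∫ s in (0:ℝ)..1, g (1/2 * s)) + (∫ s in (0:ℝ)..1, g (1/2 + 1/2 * s))
      = 2 * ∫ s in (0:ℝ)..1, g s := by
  have h1 := intervalIntegral.integral_comp_mul_left (a := 0) (b := 1) g
    (by norm_num : (1/2 : ℝ) ≠ 0)
  have h2 := intervalIntegral.integral_comp_add_mul (a := 0) (b := 1) g
    (by norm_num : (1/2 : ℝ) ≠ 0) (1/2)
  rw [h1, h2, ← intervalIntegral.integral_add_adjacent_intervals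
    (hg.intervalIntegrable 0 (1/2)) (hg.intervalIntegrable (1/2) 1)]
  norm_num
  ring

lemma flip01 (g : ℝ → ℝ) : (∫ s in (0:ℝ)..1, g (1 - s)) = ∫ s in (0:ℝ)..1, g s := by
  simpa using intervalIntegral.integral_comp_sub_left (a := 0) (b := 1) g (1:ℝ)

/-- Relations between the edge means on the subtriangles: the outer edges have mean zero, and the
middle triangle shares its edges with the other three. -/
lemma zoom_rel {w : Jet} (hw : InV w) :
    w.z3.X = -w.z1.X ∧ w.z2.Y = -w.z1.Y ∧ w.z3.G = -w.z2.G ∧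
    w.z4.X = -w.z2.X ∧ w.z4.Y = -w.z3.Y ∧ w.z4.G = -w.z1.G := by
  obtain ⟨hX, hY, hG⟩ := hw.edges
  have c1 := w.c1
  have c2 := w.c2
  refine ⟨?_, ?_, ?_, ?_, ?_, ?_⟩
  · have h := half_split (g := fun t => w.f1 (0, t)) (by fun_prop)
    change _ = 2 * w.X at h
    simp only [Jet.X, Jet.z1, Jet.z3, Jet.zoom, hom, mul_zero, add_zero, zero_add,
      intervalIntegral.integral_const_mul]
    linear_combination (1/2) * h + hX
  · have h := half_split (g := fun t => w.f2 (t, 0)) (by fun_prop)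
    change _ = 2 * w.Y at h
    simp only [Jet.Y, Jet.z1, Jet.z2, Jet.zoom, hom, mul_zero, add_zero, zero_add,
      intervalIntegral.integral_const_mul]
    linear_combination (1/2) * h + hY
  · have h := half_split (g := fun t => w.f1 (1 - t, t)) (by fun_prop)
    change _ = 2 * w.G at h
    have e1 : ∀ t : ℝ, (1/2 + 1/2 * (1 - t) : ℝ) = 1 - 1/2 * t := fun t => by ring
    have e2 : ∀ t : ℝ, (1/2 * (1 - t) : ℝ) = 1 - (1/2 + 1/2 * t) := fun t => by ring
    simp only [Jet.G, Jet.z2, Jet.z3, Jet.zoom, hom, mul_zero, add_zero, zero_add,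
      intervalIntegral.integral_const_mul, e1]
    simp only [e2]
    linear_combination (1/2) * h + hG
  · have h := flip01 fun t => w.f1 (1/2, 1/2 * t)
    have e1 : ∀ t : ℝ, (1/2 * (1 - t) : ℝ) = 1/2 + -1/2 * t := fun t => by ring
    simp only [Jet.X, Jet.z2, Jet.z4, Jet.zoom, hom, mul_zero, add_zero, zero_add,
      intervalIntegral.integral_const_mul]
    simp only [e1] at h
    linear_combination (-1/2) * h
  · have h := flip01 fun t => w.f2 (1/2 * t, 1/2)
    have e1 : ∀ t : ℝ, (1/2 * (1 - t) : ℝ) = 1/2 + -1/2 * t := fun t => by ring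
    simp only [Jet.Y, Jet.z3, Jet.z4, Jet.zoom, hom, mul_zero, add_zero, zero_add,
      intervalIntegral.integral_const_mul]
    simp only [e1] at h
    linear_combination (-1/2) * h
  · have h := flip01 fun t => w.f1 (1/2 * (1 - t), 1/2 * t)
    have e1 : ∀ t : ℝ, (1/2 * (1 - t) : ℝ) = 1/2 + -1/2 * t := fun t => by ring
    have e2 : ∀ t : ℝ, (1/2 + -1/2 * (1 - t) : ℝ) = 1/2 * t := fun t => by ring
    simp only [Jet.G, Jet.z1, Jet.z4, Jet.zoom, hom, mul_zero, add_zero, zero_add,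
      intervalIntegral.integral_const_mul]
    simp only [e1, e2] at h ⊢
    linear_combination (-1/2) * h

/-- One subdivision step: a discrete inequality for the interpolants, combined with an inequality
with constant `C` for the interpolation errors on the four subtriangles. -/
lemma step {A β γ p k C b : ℝ} {w : Jet} (hw : InV w) (hp : 0 < p) (hk : 0 < k) (hkC : C ≤ 16 * k)
    (hA : 0 ≤ A) (hβ : 0 ≤ β) (hγ : 0 ≤ γ)
    (disc : Disc A β γ p (w.f (1/2, 0)) (w.f (0, 1/2)) (w.f (1/2, 1/2)) w.z1.X w.z1.Y w.z1.G
      w.z2.X w.z3.Y w.z2.G)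
    (h1 : N2 w.z1.r ≤ C * En A β γ w.z1.r + b) (h2 : N2 w.z2.r ≤ C * En A β γ w.z2.r + b)
    (h3 : N2 w.z3.r ≤ C * En A β γ w.z3.r + b) (h4 : N2 w.z4.r ≤ C * En A β γ w.z4.r + b) :
    N2 w ≤ (p + k) * (En A β γ w + b / k) := by
  obtain ⟨rX, rY, rG, sX, sY, sG⟩ := zoom_rel hw
  have val : ∀ (o : Pt) (c : ℝ) (p : Pt), (w.zoom o c).f p = w.f (hom o c p) := by
    intro o c p; simp [Jet.zoom]
  have a1 : N2 w.z1.q = qsq 0 (w.f (1/2, 0)) (w.f (0, 1/2)) (J w.z1.f11) (J w.z1.f12)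
      (J w.z1.f22) := by
    rw [Jet.q, N2_quad]
    simp only [Jet.z1, val, hom]; norm_num [hw.v00]
  have a2 : N2 w.z2.q = qsq (w.f (1/2, 0)) 0 (w.f (1/2, 1/2)) (J w.z2.f11) (J w.z2.f12)
      (J w.z2.f22) := by
    rw [Jet.q, N2_quad]
    simp only [Jet.z2, val, hom]; norm_num [hw.v10]
  have a3 : N2 w.z3.q = qsq (w.f (0, 1/2)) (w.f (1/2, 1/2)) 0 (J w.z3.f11) (J w.z3.f12)
      (J w.z3.f22) := by
    rw [Jet.q, N2_quad]
    simp only [Jet.z3, val, hom]; norm_num [hw.v01]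
  have a4 : N2 w.z4.q = qsq (w.f (1/2, 1/2)) (w.f (0, 1/2)) (w.f (1/2, 0)) (J w.z4.f11)
      (J w.z4.f12) (J w.z4.f22) := by
    rw [Jet.q, N2_quad]
    simp only [Jet.z4, val, hom]; norm_num
  have b1 : J w.z1.f11 = w.z1.G - w.z1.X ∧ J w.z1.f12 = w.z1.G - w.f (1/2, 0) ∧
      J w.z1.f22 = w.z1.G + (w.f (0, 1/2) - w.f (1/2, 0)) - w.z1.Y := by
    refine ⟨Jet.J11 _, ?_, ?_⟩
    · rw [Jet.J12]; simp only [Jet.z1, val, hom]; norm_num [hw.v00]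
    · rw [Jet.J22]; simp only [Jet.z1, val, hom]; norm_num
  have b2 : J w.z2.f11 = w.z2.G - w.z2.X ∧ J w.z2.f12 = w.z2.G - (0 - w.f (1/2, 0)) ∧
      J w.z2.f22 = w.z2.G + (w.f (1/2, 1/2) - 0) + w.z1.Y := by
    refine ⟨Jet.J11 _, ?_, ?_⟩
    · rw [Jet.J12]; simp only [Jet.z2, val, hom]; norm_num [hw.v10]
    · rw [Jet.J22, rY]; simp only [Jet.z2, val, hom]; norm_num [hw.v10]
  have b3 : J w.z3.f11 = -w.z2.G + w.z1.X ∧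
      J w.z3.f12 = -w.z2.G - (w.f (1/2, 1/2) - w.f (0, 1/2)) ∧
      J w.z3.f22 = -w.z2.G + (0 - w.f (1/2, 1/2)) - w.z3.Y := by
    refine ⟨by rw [Jet.J11, rX, rG]; ring, ?_, ?_⟩
    · rw [Jet.J12, rG]; simp only [Jet.z3, val, hom]; norm_num
    · rw [Jet.J22, rG]; simp only [Jet.z3, val, hom]; norm_num [hw.v01]
  have b4 : J w.z4.f11 = -w.z1.G + w.z2.X ∧
      J w.z4.f12 = -w.z1.G - (w.f (0, 1/2) - w.f (1/2, 1/2)) ∧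
      J w.z4.f22 = -w.z1.G + (w.f (1/2, 0) - w.f (0, 1/2)) + w.z3.Y := by
    refine ⟨by rw [Jet.J11, sX, sG]; ring, ?_, ?_⟩
    · rw [Jet.J12, sG]; simp only [Jet.z4, val, hom]; norm_num
    · rw [Jet.J22, sG, sY]; simp only [Jet.z4, val, hom]; norm_num
  unfold Disc at disc
  rw [← b1.1, ← b1.2.1, ← b1.2.2, ← b2.1, ← b2.2.1, ← b2.2.2, ← b3.1, ← b3.2.1, ← b3.2.2,
    ← b4.1, ← b4.2.1, ← b4.2.2, ← a1, ← a2, ← a3, ← a4] at disc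
  have y1 := N2_young w.z1 hp hk
  have y2 := N2_young w.z2 hp hk
  have y3 := N2_young w.z3 hp hk
  have y4 := N2_young w.z4 hp hk
  have hE : En A β γ w = 8 * (Qf A β γ (J w.z1.f11) (J w.z1.f12) (J w.z1.f22)
      + Qf A β γ (J w.z2.f11) (J w.z2.f12) (J w.z2.f22)
      + Qf A β γ (J w.z3.f11) (J w.z3.f12) (J w.z3.f22)
      + Qf A β γ (J w.z4.f11) (J w.z4.f12) (J w.z4.f22))
      + 4 * (En A β γ w.z1.r + En A β γ w.z2.r + En A β γ w.z3.r + En A β γ w.z4.r) := by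
    rw [En_four, En_split A β γ w.z1, En_split A β γ w.z2, En_split A β γ w.z3,
      En_split A β γ w.z4]
    ring
  have hn : ∀ F : Jet, 0 ≤ En A β γ F := fun F => J_nonneg fun _ => Qf_nonneg hA hβ hγ _ _ _
  set E := En A β γ w.z1.r + En A β γ w.z2.r + En A β γ w.z3.r + En A β γ w.z4.r with hEdef
  have hE0 : 0 ≤ E := by
    have := hn w.z1.r; have := hn w.z2.r; have := hn w.z3.r; have := hn w.z4.r
    linarith
  set N := N2 w.z1.q + N2 w.z2.q + N2 w.z3.q + N2 w.z4.q
  set M := N2 w.z1.r + N2 w.z2.r + N2 w.z3.r + N2 w.z4.r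
  have t1 : N2 w ≤ (p + k) * ((1/4) * N / p + (1/4) * M / k) := by
    rw [N2_split]
    calc _ ≤ (1/4) * ((p + k) * (N2 w.z1.q / p + N2 w.z1.r / k)
        + (p + k) * (N2 w.z2.q / p + N2 w.z2.r / k) + (p + k) * (N2 w.z3.q / p + N2 w.z3.r / k)
        + (p + k) * (N2 w.z4.q / p + N2 w.z4.r / k)) := by linarith
      _ = _ := by simp only [N, M]; ring
  refine t1.trans (mul_le_mul_of_nonneg_left ?_ (by positivity))
  have t2 : (1/4) * N / p ≤ 8 * (Qf A β γ (J w.z1.f11) (J w.z1.f12) (J w.z1.f22)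
      + Qf A β γ (J w.z2.f11) (J w.z2.f12) (J w.z2.f22)
      + Qf A β γ (J w.z3.f11) (J w.z3.f12) (J w.z3.f22)
      + Qf A β γ (J w.z4.f11) (J w.z4.f12) (J w.z4.f22)) := by
    rw [div_le_iff₀ hp, mul_comm _ p]
    exact disc
  have t3 : (1/4) * M / k ≤ 4 * E + b / k := by
    rw [div_le_iff₀ hk, add_mul, div_mul_cancel₀ _ hk.ne']
    have : C * E ≤ 16 * k * E := mul_le_mul_of_nonneg_right hkC hE0
    have : M ≤ C * E + 4 * b := by rw [hEdef]; simp only [M]; linarith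
    linarith
  linarith

/-! ### A first lower bound by repeated subdivision, and deflation -/

/-- The second derivatives oscillate by at most `M` on the reference triangle. -/
def Osc (w : Jet) (M : ℝ) : Prop := ∀ p ∈ T, ∀ q ∈ T,
  |w.f11 p - w.f11 q| ≤ M ∧ |w.f12 p - w.f12 q| ≤ M ∧ |w.f22 p - w.f22 q| ≤ M

lemma bound_of_mean {f : Pt → ℝ} (hf : Continuous f) {M : ℝ} (h0 : J f = 0)
    (h : ∀ p ∈ T, ∀ q ∈ T, |f p - f q| ≤ M) : ∀ p ∈ T, |f p| ≤ M := by
  intro p hp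
  have h1 : J (fun _ => f p - M) ≤ J f := J_mono continuous_const hf fun q hq => by
    have := (abs_le.1 (h p hp q hq)).2; linarith
  have h2 : J f ≤ J (fun _ => f p + M) := J_mono hf continuous_const fun q hq => by
    have := (abs_le.1 (h p hp q hq)).1; linarith
  rw [J_const] at h1 h2
  rw [abs_le]
  constructor <;> linarith

lemma lip_T {f f1 f2 : Pt → ℝ} {M : ℝ} (h : ∀ p, HasFDerivAt f (L (f1 p) (f2 p)) p)
    (h1 : ∀ p ∈ T, |f1 p| ≤ M) (h2 : ∀ p ∈ T, |f2 p| ≤ M) :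
    ∀ p ∈ T, ∀ q ∈ T, |f p - f q| ≤ 2 * M := by
  intro p hp q hq
  have hM : 0 ≤ M := (abs_nonneg _).trans (h1 p hp)
  have := convex_T.norm_image_sub_le_of_norm_hasFDerivWithin_le (C := 2 * M)
    (fun x _ => (h x).hasFDerivWithinAt) (fun x hx => ?_) hq hp
  · rw [Real.norm_eq_abs] at this
    refine this.trans ?_
    have hn : ‖p - q‖ ≤ 1 := by
      obtain ⟨a, b, c⟩ := hp
      obtain ⟨a', b', c'⟩ := hq
      rw [Prod.norm_def]
      simp only [Prod.fst_sub, Prod.snd_sub, Real.norm_eq_abs, sup_le_iff, abs_le]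
      refine ⟨⟨?_, ?_⟩, ?_, ?_⟩ <;> linarith
    calc 2 * M * ‖p - q‖ ≤ 2 * M * 1 := mul_le_mul_of_nonneg_left hn (by positivity)
      _ = 2 * M := mul_one _
  · refine ContinuousLinearMap.opNorm_le_bound _ (by positivity) fun v => ?_
    rw [L_apply, Real.norm_eq_abs]
    have hv1 : |v.1| ≤ ‖v‖ := norm_fst_le v
    have hv2 : |v.2| ≤ ‖v‖ := norm_snd_le v
    calc |f1 x * v.1 + f2 x * v.2| ≤ |f1 x * v.1| + |f2 x * v.2| := abs_add_le _ _
      _ = |f1 x| * |v.1| + |f2 x| * |v.2| := by rw [abs_mul, abs_mul]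
      _ ≤ M * ‖v‖ + M * ‖v‖ := add_le_add
          (mul_le_mul (h1 x hx) hv1 (abs_nonneg _) hM) (mul_le_mul (h2 x hx) hv2 (abs_nonneg _) hM)
      _ = 2 * M * ‖v‖ := by ring

lemma bound_of_edge {f : Pt → ℝ} (hf : Continuous f) {M : ℝ} (x y : ℝ → ℝ) (hx : Continuous x)
    (hy : Continuous y) (hT : ∀ t ∈ Set.Icc (0:ℝ) 1, (x t, y t) ∈ T)
    (h0 : ∫ t in (0:ℝ)..1, f (x t, y t) = 0)
    (h : ∀ p ∈ T, ∀ q ∈ T, |f p - f q| ≤ M) : ∀ p ∈ T, |f p| ≤ M := by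
  intro p hp
  have hi : IntervalIntegrable (fun t => f (x t, y t)) volume 0 1 :=
    (hf.comp (hx.prodMk hy)).intervalIntegrable _ _
  have h1 : ∫ _ in (0:ℝ)..1, (f p - M) ≤ ∫ t in (0:ℝ)..1, f (x t, y t) :=
    intervalIntegral.integral_mono_on zero_le_one (by simp) hi fun t ht => by
      have := (abs_le.1 (h p hp _ (hT t ht))).2; linarith
  have h2 : ∫ t in (0:ℝ)..1, f (x t, y t) ≤ ∫ _ in (0:ℝ)..1, (f p + M) :=
    intervalIntegral.integral_mono_on zero_le_one hi (by simp) fun t ht => by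
      have := (abs_le.1 (h p hp _ (hT t ht))).1; linarith
  rw [h0] at h1 h2
  simp only [intervalIntegral.integral_const, sub_zero, one_smul] at h1 h2
  rw [abs_le]
  constructor <;> linarith

/-- Uniform bound by the oscillation of the second derivatives. -/
lemma N2_le_osc {w : Jet} (hw : InV w) {M : ℝ} (ho : Osc w M) : N2 w ≤ 8 * M ^ 2 := by
  obtain ⟨hX, hY, -⟩ := hw.edges
  have b11 := bound_of_mean w.c11 hw.m11 fun p hp q hq => (ho p hp q hq).1
  have b12 := bound_of_mean w.c12 hw.m12 fun p hp q hq => (ho p hp q hq).2.1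
  have b22 := bound_of_mean w.c22 hw.m22 fun p hp q hq => (ho p hp q hq).2.2
  have b1 := bound_of_edge w.c1 (fun _ => 0) (fun t => t) continuous_const continuous_id
    (fun t ht => ⟨le_rfl, ht.1, by simpa using ht.2⟩) hX (lip_T w.d1 b11 b12)
  have b2 := bound_of_edge w.c2 (fun s => s) (fun _ => 0) continuous_id continuous_const
    (fun t ht => ⟨ht.1, le_rfl, by simpa using ht.2⟩) hY (lip_T w.d2 b12 b22)
  have b0 := lip_T w.d0 b1 b2
  have c0 := w.c0
  have : N2 w ≤ J fun _ => (4 * M) ^ 2 := by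
    refine J_mono (by fun_prop) continuous_const fun p hp => ?_
    have := b0 p hp (0, 0) ⟨le_rfl, le_rfl, by simp⟩
    rw [hw.v00, sub_zero] at this
    refine sq_le_sq' ?_ ?_
    · linarith [(abs_le.1 this).1]
    · linarith [(abs_le.1 this).2]
  rw [J_const] at this
  linarith

lemma Osc.r {w : Jet} {M : ℝ} (h : Osc w M) : Osc w.r M := by
  intro p hp q hq
  simpa [Jet.r, Jet.comb, Jet.q, quad] using h p hp q hq

lemma Osc.zoom {w : Jet} {M : ℝ} (h : Osc w M) (o : Pt) (c : ℝ) (hc : c * c = 1/4)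
    (hT : ∀ p ∈ T, hom o c p ∈ T) : Osc (w.zoom o c) (M / 4) := by
  intro p hp q hq
  obtain ⟨h1, h2, h3⟩ := h _ (hT p hp) _ (hT q hq)
  have e : ∀ x y : ℝ, |1 * c * c * x - 1 * c * c * y| = |x - y| / 4 := by
    intro x y
    rw [one_mul, hc, ← mul_sub, abs_mul, abs_of_pos (by norm_num : (0:ℝ) < 1/4)]
    ring
  simp only [Jet.zoom, e]
  exact ⟨by linarith, by linarith, by linarith⟩

lemma hom_mem (o : Pt) (c : ℝ) (h0 : o ∈ T) (h1 : (o.1 + c, o.2) ∈ T) (h2 : (o.1, o.2 + c) ∈ T) :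
    ∀ p ∈ T, hom o c p ∈ T := by
  rintro p ⟨a, b, d⟩
  obtain ⟨a0, b0, d0⟩ := h0
  obtain ⟨a1, b1, d1⟩ := h1
  obtain ⟨a2, b2, d2⟩ := h2
  simp only at a1 b1 d1 a2 b2 d2
  refine ⟨?_, ?_, ?_⟩ <;> simp only [hom] <;>
    nlinarith [mul_nonneg a (sub_nonneg.2 d), mul_nonneg a a1, mul_nonneg a b1,
      mul_nonneg b a2, mul_nonneg b b2, mul_nonneg a (sub_nonneg.2 d1),
      mul_nonneg b (sub_nonneg.2 d2), mul_nonneg (sub_nonneg.2 d) a0, mul_nonneg (sub_nonneg.2 d) b0,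
      mul_nonneg (sub_nonneg.2 d) (sub_nonneg.2 d0)]

lemma Osc.four {w : Jet} {M : ℝ} (h : Osc w M) : Osc w.z1.r (M / 4) ∧ Osc w.z2.r (M / 4) ∧
    Osc w.z3.r (M / 4) ∧ Osc w.z4.r (M / 4) := by
  refine ⟨(h.zoom _ _ (by norm_num) (hom_mem _ _ ?_ ?_ ?_)).r,
    (h.zoom _ _ (by norm_num) (hom_mem _ _ ?_ ?_ ?_)).r,
    (h.zoom _ _ (by norm_num) (hom_mem _ _ ?_ ?_ ?_)).r,
    (h.zoom _ _ (by norm_num) (hom_mem _ _ ?_ ?_ ?_)).r⟩ <;>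
    norm_num [T]

/-- One `step` divides the squared oscillation by `16` and multiplies by at most `15`. -/
lemma crude_aux (n : ℕ) : ∀ w : Jet, InV w → ∀ M : ℝ, Osc w M →
    N2 w ≤ 1 / 110 * En 1 (2/3) (1/9) w + 8 * (15 / 16) ^ n * M ^ 2 := by
  induction n with
  | zero =>
    intro w hw M ho
    have h1 := N2_le_osc hw ho
    have h2 : 0 ≤ En 1 (2/3) (1/9) w :=
      J_nonneg fun _ => Qf_nonneg (by norm_num) (by norm_num) (by norm_num) _ _ _
    linarith
  | succ n ih =>
    intro w hw M ho
    obtain ⟨o1, o2, o3, o4⟩ := ho.four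
    have := step (p := 7 / 825) (k := 1 / 1650) (C := 1 / 110)
      (b := 8 * (15 / 16) ^ n * (M / 4) ^ 2) hw (by norm_num) (by norm_num) (by norm_num)
      (by norm_num) (by norm_num) (by norm_num) (disc_iso _ _ _ _ _ _ _ _ _)
      (ih _ (inV_r _) _ o1) (ih _ (inV_r _) _ o2) (ih _ (inV_r _) _ o3) (ih _ (inV_r _) _ o4)
    refine this.trans_eq ?_
    rw [pow_succ]
    ring

lemma exists_osc (w : Jet) : ∃ M, Osc w M := by
  obtain ⟨a, ha⟩ := isCompact_T.exists_bound_of_continuousOn w.c11.continuousOn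
  obtain ⟨b, hb⟩ := isCompact_T.exists_bound_of_continuousOn w.c12.continuousOn
  obtain ⟨c, hc⟩ := isCompact_T.exists_bound_of_continuousOn w.c22.continuousOn
  refine ⟨2 * max a (max b c), fun p hp q hq => ⟨?_, ?_, ?_⟩⟩
  · have := norm_sub_le_of_le (ha p hp) (ha q hq)
    rw [Real.norm_eq_abs] at this
    linarith [le_max_left a (max b c)]
  · have := norm_sub_le_of_le (hb p hp) (hb q hq)
    rw [Real.norm_eq_abs] at this
    linarith [(le_max_left b c).trans (le_max_right a (max b c))]
  · have := norm_sub_le_of_le (hc p hp) (hc q hq)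
    rw [Real.norm_eq_abs] at this
    linarith [(le_max_right b c).trans (le_max_right a (max b c))]

/-- The crude estimate: iterating `step`, the contribution of the oscillation of the second
derivatives tends to zero. -/
lemma crude {w : Jet} (hw : InV w) : N2 w ≤ 1 / 110 * En 1 (2/3) (1/9) w := by
  obtain ⟨M, ho⟩ := exists_osc w
  have hl : Filter.Tendsto (fun n : ℕ => 1 / 110 * En 1 (2/3) (1/9) w
      + 8 * (15 / 16 : ℝ) ^ n * M ^ 2) Filter.atTop
      (nhds (1 / 110 * En 1 (2/3) (1/9) w + 8 * 0 * M ^ 2)) :=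
    (((tendsto_pow_atTop_nhds_zero_of_lt_one (by norm_num) (by norm_num)).const_mul 8).mul_const
      (M ^ 2)).const_add _
  have := ge_of_tendsto' hl fun n => crude_aux n w hw M ho
  linarith

lemma En_aniso (w : Jet) : En 1 (2/3) (1/9) w ≤ 16 / 9 * En (37/16) (23/24) (1/16) w := by
  unfold En
  rw [← J_mul]
  have h : ∀ A β γ : ℝ, Continuous fun p => Qf A β γ (w.f11 p) (w.f12 p) (w.f22 p) :=
    fun A β γ => continuous_Qf A β γ w.c11 w.c12 w.c22
  refine J_mono (h _ _ _) (continuous_const.mul (h _ _ _)) fun p _ => ?_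
  unfold Qf
  nlinarith [sq_nonneg (w.f11 p), sq_nonneg (2 * w.f12 p - w.f11 p),
    sq_nonneg (4 * w.f22 p - 4 * w.f12 p + w.f11 p)]

lemma crude_aniso {w : Jet} (hw : InV w) :
    N2 w ≤ 8 / 495 * En (37/16) (23/24) (1/16) w := by
  have := crude hw
  have := En_aniso w
  linarith

/-- The sum of the values at the edge midpoints. -/
def ell (w : Jet) : ℝ := w.f (1/2, 0) + w.f (0, 1/2) + w.f (1/2, 1/2)

/-- On the kernel of `ell` the first step may use the better discrete constant. -/
lemma defl_iso {w : Jet} (hw : InV w) (hl : ell w = 0) :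
    N2 w ≤ (1 / 720 + 1 / 1760) * En 1 (2/3) (1/9) w := by
  have h : ∀ F : Jet, InV F → N2 F ≤ 1 / 110 * En 1 (2/3) (1/9) F + 0 := fun F hF => by
    simpa using crude hF
  have := step (p := 1 / 720) (k := 1 / 1760) hw (by norm_num) (by norm_num) (by norm_num)
    (by norm_num) (by norm_num) (by norm_num) (disc_iso_defl _ _ _ _ _ _ _ _ _ hl)
    (h _ (inV_r _)) (h _ (inV_r _)) (h _ (inV_r _)) (h _ (inV_r _))
  simpa using this

lemma defl_aniso {w : Jet} (hw : InV w) (hl : ell w = 0) :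
    N2 w ≤ (1 / 660 + 1 / 990) * En (37/16) (23/24) (1/16) w := by
  have h : ∀ F : Jet, InV F → N2 F ≤ 8 / 495 * En (37/16) (23/24) (1/16) F + 0 := fun F hF => by
    simpa using crude_aniso hF
  have := step (p := 1 / 660) (k := 1 / 990) hw (by norm_num) (by norm_num) (by norm_num)
    (by norm_num) (by norm_num) (by norm_num) (disc_aniso_defl _ _ _ _ _ _ _ _ _ hl)
    (h _ (inV_r _)) (h _ (inV_r _)) (h _ (inV_r _)) (h _ (inV_r _))
  simpa using this

/-! ### Temple's method -/

/-- Integration by parts against a symmetric tensor field `C` whose normal-normal component is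
constant on each edge and whose effective shear (the coefficient of `w` left after integrating by
parts along the edges) vanishes there: no boundary terms survive. -/
lemma weak_form (C1 C2 C3 : Jet) {k1 k2 k3 : ℝ}
    (a1 : ∀ t, C1.f (0, t) = k1) (a2 : ∀ t, C1.f1 (0, t) + C2.f2 (0, t) = 0)
    (b1 : ∀ s, C3.f (s, 0) = k2) (b2 : ∀ s, C3.f2 (s, 0) + C2.f1 (s, 0) = 0)
    (g1 : ∀ t, C1.f (1 - t, t) + C2.f (1 - t, t) + C3.f (1 - t, t) = k3)
    (g2 : ∀ t, C1.f1 (1 - t, t) - C3.f1 (1 - t, t) + C2.f2 (1 - t, t) + 2 * C3.f2 (1 - t, t) = 0)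
    {w : Jet} (hw : InV w) :
    J (fun p => C1.f p * w.f11 p + C2.f p * w.f12 p + C3.f p * w.f22 p)
      = J (fun p => (C1.f11 p + C2.f12 p + C3.f22 p) * w.f p) := by
  obtain ⟨hX, hY, hG⟩ := hw.edges
  have i1 := C1.c0; have i2 := C1.c1; have i3 := C1.c2
  have j1 := C2.c0; have j2 := C2.c1; have j3 := C2.c2
  have k1' := C3.c0; have k2' := C3.c1; have k3' := C3.c2
  have l1 := w.c0; have l2 := w.c1; have l3 := w.c2
  have m1 := C1.c11; have m2 := C2.c12; have m3 := C3.c22; have m4 := C1.c12; have m5 := C2.c11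
  have m6 := C2.c22; have m7 := C3.c12
  have n1 := w.c11; have n2 := w.c12; have n3 := w.c22
  -- the flux whose divergence is the difference of the two integrands
  have dF : ∀ p, HasFDerivAt (fun p => (1 * (C1.f p * w.f1 p) + 1 / 2 * (C2.f p * w.f2 p))
      - ((1 * C1.f1 p + 1 / 2 * C2.f2 p) * w.f p)) _ p := fun p =>
    (hasFDerivAt_comb 1 (1/2) (hasFDerivAt_mul (C1.d0 p) (w.d1 p))
      (hasFDerivAt_mul (C2.d0 p) (w.d2 p))).sub
      (hasFDerivAt_mul (hasFDerivAt_comb 1 (1/2) (C1.d1 p) (C2.d2 p)) (w.d0 p))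
  have dG : ∀ p, HasFDerivAt (fun p => (1 / 2 * (C2.f p * w.f1 p) + 1 * (C3.f p * w.f2 p))
      - ((1 / 2 * C2.f1 p + 1 * C3.f2 p) * w.f p)) _ p := fun p =>
    (hasFDerivAt_comb (1/2) 1 (hasFDerivAt_mul (C2.d0 p) (w.d1 p))
      (hasFDerivAt_mul (C3.d0 p) (w.d2 p))).sub
      (hasFDerivAt_mul (hasFDerivAt_comb (1/2) 1 (C2.d1 p) (C3.d2 p)) (w.d0 p))
  have Lsub : ∀ a b c d : ℝ, L a b - L c d = L (a - c) (b - d) := by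
    intro a b c d; ext <;> simp
  simp only [Lsub] at dF dG
  have hF := J_d1 dF (by fun_prop)
  have hG' := J_d2 dG (by fun_prop)
  have hprod : ∀ (C : Jet) (p : Pt), HasFDerivAt (fun p => C.f p * w.f p)
      (L (C.f p * w.f1 p + C.f1 p * w.f p) (C.f p * w.f2 p + C.f2 p * w.f p)) p :=
    fun C p => hasFDerivAt_mul (C.d0 p) (w.d0 p)
  have eL := ftc_left (hprod C2) (by fun_prop)
  have eB := ftc_bot (hprod C2) (by fun_prop)
  have eH := ftc_hyp (hprod (Jet.comb (1/2) 1 C2 C3))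
    (by have := (Jet.comb (1/2) 1 C2 C3).c0; have := (Jet.comb (1/2) 1 C2 C3).c1; fun_prop)
    (by have := (Jet.comb (1/2) 1 C2 C3).c0; have := (Jet.comb (1/2) 1 C2 C3).c2; fun_prop)
  simp only [hw.v00, hw.v01, hw.v10, mul_zero, sub_zero, Jet.comb] at eL eB eH
  simp only [Jet.X, Jet.Y, Jet.G] at hX hY hG
  rw [intervalIntegral.integral_sub (by apply Continuous.intervalIntegrable; fun_prop)
    (by apply Continuous.intervalIntegrable; fun_prop)] at hF hG'
  rw [hyp_flip (fun p => (1 / 2 * (C2.f p * w.f1 p) + 1 * (C3.f p * w.f2 p))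
      - ((1 / 2 * C2.f1 p + 1 * C3.f2 p) * w.f p))] at hG'
  have left : ∫ t in (0:ℝ)..1, ((1 * (C1.f (0, t) * w.f1 (0, t)) + 1 / 2 * (C2.f (0, t) * w.f2 (0, t)))
      - ((1 * C1.f1 (0, t) + 1 / 2 * C2.f2 (0, t)) * w.f (0, t))) = 0 := by
    have : ∀ t, ((1 * (C1.f (0, t) * w.f1 (0, t)) + 1 / 2 * (C2.f (0, t) * w.f2 (0, t)))
      - ((1 * C1.f1 (0, t) + 1 / 2 * C2.f2 (0, t)) * w.f (0, t)))
      = k1 * w.f1 (0, t) + 1 / 2 * (C2.f (0, t) * w.f2 (0, t) + C2.f2 (0, t) * w.f (0, t)) := by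
      intro t
      rw [a1]
      linear_combination (-w.f (0, t)) * a2 t
    simp only [this]
    rw [intervalIntegral.integral_add (by apply Continuous.intervalIntegrable; fun_prop)
      (by apply Continuous.intervalIntegrable; fun_prop), intervalIntegral.integral_const_mul,
      intervalIntegral.integral_const_mul, eL, hX]
    ring
  have bot : ∫ s in (0:ℝ)..1, ((1 / 2 * (C2.f (s, 0) * w.f1 (s, 0)) + 1 * (C3.f (s, 0) * w.f2 (s, 0)))
      - ((1 / 2 * C2.f1 (s, 0) + 1 * C3.f2 (s, 0)) * w.f (s, 0))) = 0 := by
    have : ∀ s, ((1 / 2 * (C2.f (s, 0) * w.f1 (s, 0)) + 1 * (C3.f (s, 0) * w.f2 (s, 0)))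
      - ((1 / 2 * C2.f1 (s, 0) + 1 * C3.f2 (s, 0)) * w.f (s, 0)))
      = k2 * w.f2 (s, 0) + 1 / 2 * (C2.f (s, 0) * w.f1 (s, 0) + C2.f1 (s, 0) * w.f (s, 0)) := by
      intro s
      rw [b1]
      linear_combination (-w.f (s, 0)) * b2 s
    simp only [this]
    rw [intervalIntegral.integral_add (by apply Continuous.intervalIntegrable; fun_prop)
      (by apply Continuous.intervalIntegrable; fun_prop), intervalIntegral.integral_const_mul,
      intervalIntegral.integral_const_mul, eB, hY]
    ring
  rw [left] at hF
  rw [bot] at hG'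
  have hyp : (∫ t in (0:ℝ)..1, ((1 * (C1.f (1 - t, t) * w.f1 (1 - t, t))
        + 1 / 2 * (C2.f (1 - t, t) * w.f2 (1 - t, t)))
      - ((1 * C1.f1 (1 - t, t) + 1 / 2 * C2.f2 (1 - t, t)) * w.f (1 - t, t))))
      + (∫ t in (0:ℝ)..1, ((1 / 2 * (C2.f (1 - t, t) * w.f1 (1 - t, t))
        + 1 * (C3.f (1 - t, t) * w.f2 (1 - t, t)))
      - ((1 / 2 * C2.f1 (1 - t, t) + 1 * C3.f2 (1 - t, t)) * w.f (1 - t, t)))) = 0 := by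
    rw [← intervalIntegral.integral_add (by apply Continuous.intervalIntegrable; fun_prop)
      (by apply Continuous.intervalIntegrable; fun_prop)]
    have : ∀ t : ℝ, ((1 * (C1.f (1 - t, t) * w.f1 (1 - t, t))
        + 1 / 2 * (C2.f (1 - t, t) * w.f2 (1 - t, t)))
      - ((1 * C1.f1 (1 - t, t) + 1 / 2 * C2.f2 (1 - t, t)) * w.f (1 - t, t)))
      + ((1 / 2 * (C2.f (1 - t, t) * w.f1 (1 - t, t))
        + 1 * (C3.f (1 - t, t) * w.f2 (1 - t, t)))
      - ((1 / 2 * C2.f1 (1 - t, t) + 1 * C3.f2 (1 - t, t)) * w.f (1 - t, t)))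
      = k3 * w.f1 (1 - t, t) + ((1 / 2 * C2.f (1 - t, t) + 1 * C3.f (1 - t, t)) * w.f2 (1 - t, t)
        + (1 / 2 * C2.f2 (1 - t, t) + 1 * C3.f2 (1 - t, t)) * w.f (1 - t, t)
        - ((1 / 2 * C2.f (1 - t, t) + 1 * C3.f (1 - t, t)) * w.f1 (1 - t, t)
        + (1 / 2 * C2.f1 (1 - t, t) + 1 * C3.f1 (1 - t, t)) * w.f (1 - t, t))) := by
      intro t
      linear_combination w.f1 (1 - t, t) * g1 t - w.f (1 - t, t) * g2 t
    simp only [this]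
    rw [intervalIntegral.integral_add (by apply Continuous.intervalIntegrable; fun_prop)
      (by apply Continuous.intervalIntegrable; fun_prop), intervalIntegral.integral_const_mul,
      eH, hG]
    ring
  have tot := congrArg₂ (· + ·) hF hG'
  simp only [sub_zero, hyp] at tot
  rw [← J_add (by fun_prop) (by fun_prop)] at tot
  rw [← sub_eq_zero, ← J_sub (by fun_prop) (by fun_prop), ← tot]
  congr 1
  ext p
  ring

/-- The bilinear form of the energy. -/
def Bf (A β γ : ℝ) (F G : Jet) : ℝ := J fun p => A * F.f11 p * G.f11 p
  + β * (2 * F.f12 p - F.f11 p) * (2 * G.f12 p - G.f11 p)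
  + γ * (4 * F.f22 p - 4 * F.f12 p + F.f11 p) * (4 * G.f22 p - 4 * G.f12 p + G.f11 p)

lemma J_comb3 {f g h : Pt → ℝ} (hf : Continuous f) (hg : Continuous g) (hh : Continuous h)
    (x y z : ℝ) : J (fun p => x * f p + y * g p + z * h p) = x * J f + y * J g + z * J h := by
  rw [J_add (by fun_prop) (by fun_prop), J_comb hf hg, J_mul]

lemma En_comb (A β γ α : ℝ) (V w : Jet) : En A β γ (Jet.comb α 1 V w)
    = α ^ 2 * En A β γ V + 2 * α * Bf A β γ V w + 1 * En A β γ w := by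
  have a1 := V.c11; have a2 := V.c12; have a3 := V.c22
  have b1 := w.c11; have b2 := w.c12; have b3 := w.c22
  unfold En Bf
  rw [← J_comb3 (continuous_Qf _ _ _ a1 a2 a3) (by fun_prop) (continuous_Qf _ _ _ b1 b2 b3)]
  congr 1
  ext p
  simp only [Jet.comb, Qf]
  ring

lemma N2_comb (α : ℝ) (V w : Jet) : N2 (Jet.comb α 1 V w)
    = α ^ 2 * N2 V + 2 * α * J (fun p => V.f p * w.f p) + 1 * N2 w := by
  have a1 := V.c0
  have b1 := w.c0
  unfold N2
  rw [← J_comb3 (by fun_prop) (by fun_prop) (by fun_prop)]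
  congr 1
  ext p
  simp only [Jet.comb]
  ring

/-- A Lehmann–Goerisch type inclusion. If `V` solves the eigenvalue equation up to a
residual `e`, which is small compared with the defect `En V - lam N2 V`, and if the form
`En - lam N2` is coercive at `w`, then that form is nonnegative on the plane of `V` and `w`. -/
lemma temple {A β γ lam κ : ℝ} (hA : 0 ≤ A) (hβ : 0 ≤ β) (hγ : 0 ≤ γ) (hκ : 0 < κ)
    {V w : Jet} {e1 e2 e3 : Pt → ℝ} (he1 : Continuous e1) (he2 : Continuous e2)
    (he3 : Continuous e3)
    (hweak : Bf A β γ V w = lam * J (fun p => V.f p * w.f p)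
      + J (fun p => A * e1 p * w.f11 p + β * e2 p * (2 * w.f12 p - w.f11 p)
        + γ * e3 p * (4 * w.f22 p - 4 * w.f12 p + w.f11 p)))
    (hw : κ * En A β γ w ≤ En A β γ w - lam * N2 w)
    (hV : J (fun p => A * e1 p ^ 2 + β * e2 p ^ 2 + γ * e3 p ^ 2)
      ≤ κ * (En A β γ V - lam * N2 V)) (α : ℝ) :
    lam * N2 (Jet.comb α 1 V w) ≤ En A β γ (Jet.comb α 1 V w) := by
  have b1 := w.c11; have b2 := w.c12; have b3 := w.c22
  have pos : 0 ≤ κ ^ 2 * En A β γ w + (2 * α * κ)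
      * J (fun p => A * e1 p * w.f11 p + β * e2 p * (2 * w.f12 p - w.f11 p)
        + γ * e3 p * (4 * w.f22 p - 4 * w.f12 p + w.f11 p))
      + α ^ 2 * J (fun p => A * e1 p ^ 2 + β * e2 p ^ 2 + γ * e3 p ^ 2) := by
    unfold En
    rw [← J_comb3 (continuous_Qf _ _ _ b1 b2 b3) (by fun_prop) (by fun_prop)]
    refine J_nonneg fun p => ?_
    have : κ ^ 2 * Qf A β γ (w.f11 p) (w.f12 p) (w.f22 p) + (2 * α * κ)
      * (A * e1 p * w.f11 p + β * e2 p * (2 * w.f12 p - w.f11 p)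
        + γ * e3 p * (4 * w.f22 p - 4 * w.f12 p + w.f11 p))
      + α ^ 2 * (A * e1 p ^ 2 + β * e2 p ^ 2 + γ * e3 p ^ 2)
      = A * (κ * w.f11 p + α * e1 p) ^ 2 + β * (κ * (2 * w.f12 p - w.f11 p) + α * e2 p) ^ 2
        + γ * (κ * (4 * w.f22 p - 4 * w.f12 p + w.f11 p) + α * e3 p) ^ 2 := by
      unfold Qf; ring
    rw [this]
    positivity
  rw [En_comb, N2_comb, hweak]
  have h1 := mul_le_mul_of_nonneg_left hV (sq_nonneg α)
  have h2 := mul_le_mul_of_nonneg_left hw hκ.le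
  rw [← sub_nonneg]
  refine nonneg_of_mul_nonneg_right (?_ : 0 ≤ κ * _) hκ
  linarith

namespace Poly

/-- Adds a monomial, merging it with a monomial of the same exponents. -/
def ins (c : ℚ) (a b : ℕ) : Poly → Poly
  | [] => [(c, a, b)]
  | (c', a', b') :: l => if a = a' ∧ b = b' then (c + c', a', b') :: l else (c', a', b') :: ins c a b l

/-- Merges monomials with equal exponents. -/
def norm : Poly → Poly
  | [] => []
  | (c, a, b) :: l => ins c a b (norm l)

lemma ev_ins (c : ℚ) (a b : ℕ) (l : Poly) (p : Pt) :
    ev (ins c a b l) p = c * p.1 ^ a * p.2 ^ b + ev l p := by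
  induction l with
  | nil => simp [ev, ins]
  | cons x l ih =>
    obtain ⟨c', a', b'⟩ := x
    unfold ins
    split_ifs with h
    · simp only [ev, h.1, h.2]; push_cast; ring
    · simp only [ev, ih]; ring

lemma ev_norm (l : Poly) (p : Pt) : ev (norm l) p = ev l p := by
  induction l with
  | nil => rfl
  | cons x l ih => obtain ⟨c, a, b⟩ := x; simp only [norm, ev_ins, ih, ev]

/-- Value of a polynomial at a rational point. -/
def evQ (x y : ℚ) : Poly → ℚ
  | [] => 0
  | (c, a, b) :: l => c * x ^ a * y ^ b + evQ x y l

lemma ev_rat (l : Poly) (x y : ℚ) : ev l ((x : ℝ), (y : ℝ)) = evQ x y l := by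
  induction l with
  | nil => simp [ev, evQ]
  | cons z l ih => obtain ⟨c, a, b⟩ := z; simp only [ev, evQ, ih]; push_cast; ring

/-- The polynomial `a F + b G + c H`. -/
def lin3 (a b c : ℚ) (F G H : Poly) : Poly := norm (smul a F ++ (smul b G ++ smul c H))

lemma ev_lin3 (a b c : ℚ) (F G H : Poly) (p : Pt) :
    ev (lin3 a b c F G H) p = a * ev F p + b * ev G p + c * ev H p := by
  simp only [lin3, ev_norm, ev_append, ev_smul]; ring

/-- Integral of `a F² + b G² + c H²`. -/
def sq3 (a b c : ℚ) (F G H : Poly) : ℚ :=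
  a * int (mul F F) + b * int (mul G G) + c * int (mul H H)

lemma J_sq3 (a b c : ℚ) (F G H : Poly) :
    J (fun p => (a : ℝ) * ev F p ^ 2 + b * ev G p ^ 2 + c * ev H p ^ 2) = sq3 a b c F G H := by
  have h1 := continuous_ev F; have h2 := continuous_ev G; have h3 := continuous_ev H
  have key : ∀ l : Poly, J (fun p => ev l p ^ 2) = int (mul l l) := by
    intro l
    rw [← J_ev]
    congr 1; ext p; rw [ev_mul]; ring
  rw [J_comb3 (by fun_prop) (by fun_prop) (by fun_prop), key, key, key, sq3]
  push_cast
  ring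

end Poly

/-! ### Certified trial functions -/

/-- The tensor field `C` for the equilateral shape: first diagonal entry. -/
def iso1 : Poly :=
  [(970, 0, 0), (-1780, 1, 0), (-8380, 2, 0), (-14850, 1, 1), (19610, 3, 0), (60650, 2, 1),
   (32160, 1, 2), (-19290, 4, 0), (-100000, 3, 1), (-114010, 2, 2), (-34620, 1, 3),
   (11136, 5, 0), (83180, 4, 1), (138690, 3, 2), (101800, 2, 3), (17310, 1, 4), (-3135, 6, 0),
   (-28980, 5, 1), (-62570, 4, 2), (-67180, 3, 3), (-33590, 2, 4)]

/-- The tensor field `C` for the equilateral shape: twice the off-diagonal entry. -/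
def iso2 : Poly :=
  [(-2809, 0, 0), (1780, 1, 0), (1780, 0, 1), (7425, 2, 0), (33520, 1, 1), (7425, 0, 2),
   (-10720, 3, 0), (-96210, 2, 1), (-96210, 1, 2), (-10720, 0, 3), (8655, 4, 0), (149160, 3, 1),
   (262090, 2, 2), (149160, 1, 3), (8655, 0, 4), (-3462, 5, 0), (-123840, 4, 1), (-299040, 3, 2),
   (-299040, 2, 3), (-123840, 1, 4), (-3462, 0, 5), (39150, 5, 1), (131465, 4, 2),
   (178360, 3, 3), (131465, 2, 4), (39150, 1, 5)]

/-- The tensor field `C` for the equilateral shape: second diagonal entry. -/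
def iso3 : Poly :=
  [(970, 0, 0), (-1780, 0, 1), (-14850, 1, 1), (-8380, 0, 2), (32160, 2, 1), (60650, 1, 2),
   (19610, 0, 3), (-34620, 3, 1), (-114010, 2, 2), (-100000, 1, 3), (-19290, 0, 4),
   (17310, 4, 1), (101800, 3, 2), (138690, 2, 3), (83180, 1, 4), (11136, 0, 5), (-33590, 4, 2),
   (-67180, 3, 3), (-62570, 2, 4), (-28980, 1, 5), (-3135, 0, 6)]

/-- The tensor field `C` for the flat shape: first diagonal entry. -/
def ani1 : Poly :=
  [(180, 0, 0), (-660, 1, 0), (-600, 2, 0), (-1590, 1, 1), (1830, 3, 0), (5970, 2, 1),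
   (2640, 1, 2), (-960, 4, 0), (-6000, 3, 1), (-5880, 2, 2), (-2160, 1, 3), (60, 5, 0),
   (1800, 4, 1), (3375, 3, 2), (2430, 2, 3), (1680, 1, 4)]

/-- The tensor field `C` for the flat shape: twice the off-diagonal entry. -/
def ani2 : Poly :=
  [(-540, 0, 0), (570, 1, 0), (660, 0, 1), (330, 2, 0), (2160, 1, 1), (795, 0, 2), (-420, 3, 0),
   (-4230, 2, 1), (-3780, 1, 2), (-880, 0, 3), (300, 4, 0), (3360, 3, 1), (5010, 2, 2),
   (3270, 1, 3), (540, 0, 4), (-120, 5, 0), (-900, 4, 1), (-1350, 3, 2), (-840, 2, 3),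
   (-2040, 1, 4), (-336, 0, 5)]

/-- The tensor field `C` for the flat shape: second diagonal entry. -/
def ani3 : Poly :=
  [(210, 0, 0), (-570, 0, 1), (-660, 1, 1), (-480, 0, 2), (1260, 2, 1), (1905, 1, 2),
   (325, 0, 3), (-1200, 3, 1), (-2445, 2, 2), (-1560, 1, 3), (825, 0, 4), (600, 4, 1),
   (1200, 3, 2), (915, 2, 3), (315, 1, 4), (-549, 0, 5)]

/-- The trial function `div div C / 184.96` for the equilateral shape. -/
def isoV : Poly :=
  [(107875/578, 0, 4), (107875/289, 1, 3), (323625/578, 2, 2), (107875/289, 3, 1),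
   (107875/578, 4, 0), (-107875/289, 0, 3), (225375/1156, 1, 2), (225375/1156, 2, 1),
   (-107875/289, 3, 0), (-75125/1156, 0, 2), (-27875/34, 1, 1), (-75125/1156, 2, 0),
   (290875/1156, 0, 1), (290875/1156, 1, 0), (0, 0, 0)]

/-- Residual of the trial function `isoV`: component 1 in the diagonalization `Qf` of the form. -/
def isoE1 : Poly :=
  [(3135, 6, 0), (-390040/289, 1, 0), (3992315/578, 2, 0), (-14250, 3, 0), (29925/2, 4, 0),
   (-9405, 5, 0), (9405, 5, 1), (35851/578, 0, 0), (-31835/578, 0, 1), (2336345/578, 1, 1),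
   (-287665/578, 0, 2), (-20585, 2, 1), (1565/2, 1, 2), (915/2, 0, 3), (34075, 3, 1),
   (22935/2, 2, 2), (-14960, 1, 3), (495, 0, 4), (-51175/2, 4, 1), (-14620, 3, 2),
   (26095/2, 2, 3), (23815, 1, 4), (-1053, 0, 5), (5235, 4, 2), (-5205, 3, 3), (-16500, 2, 4),
   (-12330, 1, 5), (3135/4, 0, 6)]

/-- Residual of the trial function `isoV`: component 2 in the diagonalization `Qf` of the form. -/
def isoE2 : Poly :=
  [(9405/4, 0, 6), (-15255/2, 1, 5), (-206685/4, 2, 4), (-83385, 3, 3), (-293625/4, 4, 2),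
   (-11511/2, 0, 5), (30495, 1, 4), (240525/2, 2, 3), (147930, 3, 2), (159795/2, 4, 1),
   (31905/4, 0, 4), (-36870, 1, 3), (-111060, 2, 2), (-85905, 3, 1), (-13335/2, 0, 3),
   (26670, 1, 2), (96075/2, 2, 1), (2122485/1156, 0, 2), (-6798945/578, 1, 1),
   (225375/578, 0, 1), (-150837/1156, 0, 0), (-58725/2, 5, 1), (5193/2, 5, 0), (-25965/4, 4, 0),
   (8040, 3, 0), (-22275/4, 2, 0), (486810/289, 1, 0)]

/-- Residual of the trial function `isoV`: component 3 in the diagonalization `Qf` of the form. -/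
def isoE3 : Poly :=
  [(28215/4, 0, 6), (65205, 1, 5), (281565/2, 2, 4), (151155, 3, 3), (151155/2, 4, 2),
   (-25056, 0, 5), (-187155, 1, 4), (-624105/2, 2, 3), (-229050, 3, 2), (-77895/2, 4, 1),
   (86805/2, 0, 4), (225000, 1, 3), (513045/2, 2, 2), (77895, 3, 1), (-88245/2, 0, 3),
   (-272925/2, 1, 2), (-72360, 2, 1), (7067220/289, 0, 2), (20606925/578, 1, 1),
   (-3539235/578, 0, 1), (129195/289, 0, 0), (0, 4, 0), (0, 3, 0), (647250/289, 2, 0),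
   (-647250/289, 1, 0)]

/-- The trial function `div div C / 184.96` for the flat shape. -/
def aniV : Poly :=
  [(-2625/34, 0, 3), (237375/2312, 1, 2), (237375/2312, 2, 1), (0, 3, 0), (0, 4, 0),
   (99375/2312, 0, 2), (-79125/578, 1, 1), (-79125/2312, 2, 0), (79125/2312, 0, 1),
   (79125/2312, 1, 0), (0, 0, 0), (0, 0, 4)]

/-- Residual of the trial function `aniV`: component 1 in the diagonalization `Qf` of the form. -/
def aniE1 : Poly :=
  [(6000/37, 1, 0), (6960/37, 2, 0), (-25920/37, 3, 0), (12960/37, 4, 0), (0, 5, 0),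
   (-2234025/42772, 0, 0), (5314875/42772, 0, 1), (10800/37, 1, 1), (-120, 0, 2),
   (-66720/37, 2, 1), (-19620/37, 1, 2), (5740/37, 0, 3), (73920/37, 3, 1), (63780/37, 2, 2),
   (14640/37, 1, 3), (-7620/37, 0, 4), (-24000/37, 4, 1), (-48000/37, 3, 2), (-35820/37, 2, 3),
   (-11820/37, 1, 4), (132, 0, 5)]

/-- Residual of the trial function `aniV`: component 2 in the diagonalization `Qf` of the form. -/
def aniE2 : Poly :=
  [(10620/23, 0, 5), (900, 1, 4), (-900/23, 2, 3), (1800/23, 3, 2), (3600/23, 4, 1),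
   (-16380/23, 0, 4), (-20520/23, 1, 3), (-30780/23, 2, 2), (-25920/23, 3, 1), (6660/23, 0, 3),
   (22500/23, 1, 2), (35640/23, 2, 1), (-3780/23, 0, 2), (-18000/23, 1, 1),
   (4211145/26588, 0, 1), (-881865/26588, 0, 0), (1440/23, 5, 0), (-3600/23, 4, 0),
   (5040/23, 3, 0), (-3960/23, 2, 0), (1506105/13294, 1, 0)]

/-- Residual of the trial function `aniV`: component 3 in the diagonalization `Qf` of the form. -/
def aniE3 : Poly :=
  [(2196, 0, 5), (-1260, 1, 4), (-3660, 2, 3), (-4800, 3, 2), (-2400, 4, 1), (-3300, 0, 4),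
   (6240, 1, 3), (9780, 2, 2), (4800, 3, 1), (-1300, 0, 3), (-7620, 1, 2), (-5040, 2, 1),
   (1920, 0, 2), (2640, 1, 1), (-218445/1156, 0, 1), (-19665/1156, 0, 0), (0, 4, 0), (0, 3, 0),
   (0, 1, 0), (0, 2, 0)]

/-- The deflated inequality on the kernel of `ell` extends to the whole space, with the constant
`lam`, once polynomials `c1`, `c2`, `c3` are given for which the conditions of `weak_form` hold and
the numerical comparison `hnum` of residual and defect is satisfied. The trial function is `v`,
and `e1`, `e2`, `e3` is its residual. -/
lemma certificate (c1 c2 c3 v e1 e2 e3 : Poly) {A β γ lam μ n1 n2 n3 m0 m1 m2 m3 : ℚ} {k1 k2 k3 : ℝ}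
    (hA : 0 < A) (hβ : 0 < β) (hγ : 0 < γ) (hlam : 0 < lam) (hμ : lam * μ < 1)
    (hv : v = Poly.lin3 lam⁻¹ lam⁻¹ lam⁻¹ c1.ds.ds c2.ds.dt c3.dt.dt)
    (he1 : e1 = Poly.lin3 1 1 (-A⁻¹) v.ds.ds [] (Poly.lin3 1 (1/2) (1/4) c1 c2 c3))
    (he2 : e2 = Poly.lin3 2 (-1) (-(2 * β)⁻¹) v.ds.dt v.ds.ds (c2 ++ c3))
    (he3 : e3 = Poly.lin3 1 1 (-(4 * γ)⁻¹) (Poly.lin3 4 (-4) 1 v.dt.dt v.ds.dt v.ds.ds) [] c3)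
    (a1 : ∀ t, c1.jet.f (0, t) = k1) (a2 : ∀ t, c1.jet.f1 (0, t) + c2.jet.f2 (0, t) = 0)
    (b1 : ∀ s, c3.jet.f (s, 0) = k2) (b2 : ∀ s, c3.jet.f2 (s, 0) + c2.jet.f1 (s, 0) = 0)
    (g1 : ∀ t, c1.jet.f (1 - t, t) + c2.jet.f (1 - t, t) + c3.jet.f (1 - t, t) = k3)
    (g2 : ∀ t, c1.jet.f1 (1 - t, t) - c3.jet.f1 (1 - t, t) + c2.jet.f2 (1 - t, t)
      + 2 * c3.jet.f2 (1 - t, t) = 0)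
    (hvert : v.evQ 0 0 = 0 ∧ v.evQ 1 0 = 0 ∧ v.evQ 0 1 = 0)
    (hmean : v.ds.ds.int = 0 ∧ v.ds.dt.int = 0 ∧ v.dt.dt.int = 0)
    (hell : v.evQ (1/2) 0 + v.evQ 0 (1/2) + v.evQ (1/2) (1/2) ≠ 0)
    (hn1 : (e1.mul e1).int = n1) (hn2 : (e2.mul e2).int = n2) (hn3 : (e3.mul e3).int = n3)
    (hm1 : (v.ds.ds.mul v.ds.ds).int = m1)
    (hm2 : ((Poly.lin3 2 (-1) 0 v.ds.dt v.ds.ds []).mul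
      (Poly.lin3 2 (-1) 0 v.ds.dt v.ds.ds [])).int = m2)
    (hm3 : ((Poly.lin3 4 (-4) 1 v.dt.dt v.ds.dt v.ds.ds).mul
      (Poly.lin3 4 (-4) 1 v.dt.dt v.ds.dt v.ds.ds)).int = m3)
    (hm0 : (v.mul v).int = m0)
    (hnum : A * n1 + β * n2 + γ * n3
      ≤ (1 - lam * μ) * (A * m1 + β * m2 + γ * m3 - lam * m0))
    (defl : ∀ w : Jet, InV w → ell w = 0 → N2 w ≤ μ * En A β γ w) {u : Jet} (hu : InV u) :
    lam * N2 u ≤ En A β γ u := by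
  have hA' : (0:ℝ) < A := by exact_mod_cast hA
  have hβ' : (0:ℝ) < β := by exact_mod_cast hβ
  have hγ' : (0:ℝ) < γ := by exact_mod_cast hγ
  have hl' : (0:ℝ) < lam := by exact_mod_cast hlam
  have hV : InV v.jet := by
    refine ⟨?_, ?_, ?_, ?_, ?_, ?_⟩
    · have := v.ev_rat 0 0; rw [hvert.1] at this; simpa [Poly.jet] using this
    · have := v.ev_rat 1 0; rw [hvert.2.1] at this; simpa [Poly.jet] using this
    · have := v.ev_rat 0 1; rw [hvert.2.2] at this; simpa [Poly.jet] using this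
    · simp [Poly.jet, Poly.J_ev, hmean.1]
    · simp [Poly.jet, Poly.J_ev, hmean.2.1]
    · simp [Poly.jet, Poly.J_ev, hmean.2.2]
  have hellV : ell v.jet ≠ 0 := by
    have : ell v.jet = ((v.evQ (1/2) 0 + v.evQ 0 (1/2) + v.evQ (1/2) (1/2) : ℚ) : ℝ) := by
      push_cast
      simp only [← Poly.ev_rat, ell, Poly.jet]
      norm_num
    rw [this]
    exact_mod_cast hell
  -- subtracting this multiple of the trial function leaves a function in the kernel of `ell`
  set α := ell u / ell v.jet with hα
  set w := Jet.comb 1 (-α) u v.jet with hw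
  have hwV : InV w := hu.comb hV _ _
  have hwell : ell w = 0 := by
    have : ell w = ell u - α * ell v.jet := by simp [ell, hw, Jet.comb]; ring
    rw [this, hα, div_mul_cancel₀ _ hellV, sub_self]
  have hd := defl w hwV hwell
  have hN : N2 u = N2 (Jet.comb α 1 v.jet w) := by
    unfold N2; congr 1; ext p; simp [hw, Jet.comb]
  have hE : En A β γ u = En A β γ (Jet.comb α 1 v.jet w) := by
    unfold En; congr 1; ext p; simp [hw, Jet.comb]
  rw [hN, hE]
  have wf := weak_form c1.jet c2.jet c3.jet a1 a2 b1 b2 g1 g2 hwV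
  have vv : ∀ p, lam * v.ev p = c1.ds.ds.ev p + c2.ds.dt.ev p + c3.dt.dt.ev p := by
    intro p
    rw [hv, Poly.ev_lin3]
    push_cast
    field_simp
  have x1 : ∀ p, A * e1.ev p = A * v.ds.ds.ev p - (c1.ev p + c2.ev p / 2 + c3.ev p / 4) := by
    intro p
    rw [he1, Poly.ev_lin3, Poly.ev_lin3]
    push_cast
    simp only [Poly.ev]
    field_simp
    ring
  have x2 : ∀ p, β * e2.ev p = β * (2 * v.ds.dt.ev p - v.ds.ds.ev p)
      - (c2.ev p + c3.ev p) / 2 := by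
    intro p
    rw [he2, Poly.ev_lin3, Poly.ev_append]
    push_cast
    field_simp
    ring
  have x3 : ∀ p, γ * e3.ev p = γ * (4 * v.dt.dt.ev p - 4 * v.ds.dt.ev p + v.ds.ds.ev p)
      - c3.ev p / 4 := by
    intro p
    rw [he3, Poly.ev_lin3, Poly.ev_lin3]
    push_cast
    simp only [Poly.ev]
    field_simp
    ring
  have w0 := w.c0; have w1 := w.c11; have w2 := w.c12; have w3 := w.c22
  have y1 := e1.continuous_ev; have y2 := e2.continuous_ev; have y3 := e3.continuous_ev
  have z1 := c1.continuous_ev; have z2 := c2.continuous_ev; have z3 := c3.continuous_ev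
  refine temple hA'.le hβ'.le hγ'.le (κ := 1 - lam * μ) ?_ y1 y2 y3 ?_ ?_ ?_ α
  · have : ((lam * μ : ℚ) : ℝ) < 1 := by exact_mod_cast hμ
    push_cast at this
    linarith
  · have r1 : lam * J (fun p => v.jet.f p * w.f p)
        = J (fun p => c1.ev p * w.f11 p + c2.ev p * w.f12 p + c3.ev p * w.f22 p) := by
      refine Eq.trans ?_ wf.symm
      rw [← J_mul]
      congr 1; ext p
      simp only [Poly.jet]
      rw [← vv]
      ring
    rw [r1, ← J_add (by fun_prop) (by fun_prop)]
    unfold Bf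
    congr 1; ext p
    simp only [x1, x2, x3]
    simp only [Poly.jet]
    ring
  · have := mul_le_mul_of_nonneg_left hd hl'.le
    linarith
  · have hEn : En A β γ v.jet = (Poly.sq3 A β γ v.ds.ds (Poly.lin3 2 (-1) 0 v.ds.dt v.ds.ds [])
        (Poly.lin3 4 (-4) 1 v.dt.dt v.ds.dt v.ds.ds) : ℚ) := by
      rw [← Poly.J_sq3]
      unfold En
      congr 1; ext p
      simp only [Poly.ev_lin3, Qf, Poly.jet]
      push_cast
      ring
    have hNn : N2 v.jet = ((v.mul v).int : ℚ) := by
      rw [← Poly.J_ev]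
      unfold N2
      congr 1; ext p
      rw [Poly.ev_mul]
      simp only [Poly.jet]
      ring
    rw [Poly.J_sq3, hEn, hNn, Poly.sq3, Poly.sq3, hn1, hn2, hn3, hm1, hm2, hm3, hm0]
    exact_mod_cast hnum

/-- The estimate for the energy of the equilateral triangle. -/
lemma bound_iso {u : Jet} (hu : InV u) :
    18496 / 100 * N2 u ≤ En 1 (2/3) (1/9) u := by
  have := certificate iso1 iso2 iso3 isoV isoE1 isoE2 isoE3 (A := 1) (β := 2/3) (γ := 1/9) (lam := 18496/100)
    (μ := 1/720 + 1/1760) (k1 := 970) (k2 := 970) (k3 := 970)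
    (n1 := 49218174949787 / 337093428672) (n2 := 9262607878169 / 37454825408)
    (n3 := 49218174949787 / 37454825408) (m1 := 119020390625 / 1336336)
    (m2 := 338441946875 / 1336336) (m3 := 1071183515625 / 1336336)
    (m0 := 840523541875 / 449008896)
    (by norm_num) (by norm_num) (by norm_num) (by norm_num) (by norm_num)
    (by decide +kernel) (by decide +kernel) (by decide +kernel) (by decide +kernel)
    (fun t => by simp [Poly.jet, Poly.ev, iso1])
    (fun t => by simp [Poly.jet, Poly.ev, Poly.ds, Poly.dt, iso1, iso2]; ring)
    (fun t => by simp [Poly.jet, Poly.ev, iso3])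
    (fun t => by simp [Poly.jet, Poly.ev, Poly.ds, Poly.dt, iso3, iso2]; ring)
    (fun t => by simp [Poly.jet, Poly.ev, iso1, iso2, iso3]; ring)
    (fun t => by simp [Poly.jet, Poly.ev, Poly.ds, Poly.dt, iso1, iso2, iso3]; ring)
    (by decide +kernel) (by decide +kernel) (by decide +kernel) (by decide +kernel)
    (by decide +kernel) (by decide +kernel) (by decide +kernel) (by decide +kernel)
    (by decide +kernel) (by decide +kernel) (by norm_num)
    (fun w hw hl => by have := defl_iso hw hl; push_cast; exact this) hu
  push_cast at this
  exact this

/-- The estimate for the energy of flat triangles. -/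
lemma bound_aniso {u : Jet} (hu : InV u) :
    18496 / 100 * N2 u ≤ En (37/16) (23/24) (1/16) u := by
  have := certificate ani1 ani2 ani3 aniV aniE1 aniE2 aniE3 (A := 37/16) (β := 23/24) (γ := 1/16)
    (lam := 18496/100)
    (μ := 1/660 + 1/990) (k1 := 180) (k2 := 210) (k3 := 180)
    (n1 := 553916012496397 / 5071218723648) (n2 := 6157084147287 / 217731897152)
    (n3 := 1675261902775 / 336756672) (m1 := 6260765625 / 5345344)
    (m2 := 18782296875 / 5345344) (m3 := 905114390625 / 5345344)
    (m0 := 7046246875 / 85525504)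
    (by norm_num) (by norm_num) (by norm_num) (by norm_num) (by norm_num)
    (by decide +kernel) (by decide +kernel) (by decide +kernel) (by decide +kernel)
    (fun t => by simp [Poly.jet, Poly.ev, ani1])
    (fun t => by simp [Poly.jet, Poly.ev, Poly.ds, Poly.dt, ani1, ani2]; ring)
    (fun t => by simp [Poly.jet, Poly.ev, ani3])
    (fun t => by simp [Poly.jet, Poly.ev, Poly.ds, Poly.dt, ani3, ani2]; ring)
    (fun t => by simp [Poly.jet, Poly.ev, ani1, ani2, ani3]; ring)
    (fun t => by simp [Poly.jet, Poly.ev, Poly.ds, Poly.dt, ani1, ani2, ani3]; ring)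
    (by decide +kernel) (by decide +kernel) (by decide +kernel) (by decide +kernel)
    (by decide +kernel) (by decide +kernel) (by decide +kernel) (by decide +kernel)
    (by decide +kernel) (by decide +kernel) (by norm_num)
    (fun w hw hl => by have := defl_aniso hw hl; push_cast; exact this) hu
  push_cast at this
  exact this

/-! ### Comparison with an arbitrary triangle -/

/-- The value at `(v, v')` of the symmetric bilinear form with matrix `[[x, y], [y, z]]`. -/
def bil (x y z : ℝ) (v v' : Pt) : ℝ := x * v.1 * v'.1 + y * (v.1 * v'.2 + v.2 * v'.1)
  + z * v.2 * v'.2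

/-- If `diag (N, M)` exceeds the Gram matrix of `a` and `c` by the positive semidefinite matrix with
diagonal entries `m` and off-diagonal entries `∓m`, the Frobenius norm of a symmetric matrix controls
its entries with respect to `a` and `c`. -/
lemma frobenius_ge {N M m σ : ℝ} (hN : 0 < N) (hM : 0 < M) (hm : 0 ≤ m) {a c : Pt}
    (hσ : σ = m ∨ σ = -m)
    (ha : a.1 ^ 2 + a.2 ^ 2 = N - m) (hc : c.1 ^ 2 + c.2 ^ 2 = M - m)
    (hac : a.1 * c.1 + a.2 * c.2 = σ) (x y z : ℝ) :
    bil x y z a a ^ 2 / N ^ 2 + 2 * bil x y z a c ^ 2 / (N * M) + bil x y z c c ^ 2 / M ^ 2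
      ≤ x ^ 2 + 2 * y ^ 2 + z ^ 2 := by
  -- Bessel's inequality for the vectors `a` and `c`, with weights `1 / N` and `1 / M`
  have K : ∀ v w : ℝ, 0 ≤ v ^ 2 + w ^ 2 - (v * a.1 + w * a.2) ^ 2 / N
      - (v * c.1 + w * c.2) ^ 2 / M := by
    intro v w
    set s := (v * a.1 + w * a.2) / N with hs
    set t := (v * c.1 + w * c.2) / M with ht
    have e1 : v * a.1 + w * a.2 = N * s := by rw [hs]; field_simp
    have e2 : v * c.1 + w * c.2 = M * t := by rw [ht]; field_simp
    have e3 : (v * a.1 + w * a.2) ^ 2 / N = N * s ^ 2 := by rw [e1]; field_simp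
    have e4 : (v * c.1 + w * c.2) ^ 2 / M = M * t ^ 2 := by rw [e2]; field_simp
    rw [e3, e4]
    have h1 := sq_nonneg (v - s * a.1 - t * c.1)
    have h2 := sq_nonneg (w - s * a.2 - t * c.2)
    have h3 : v ^ 2 + w ^ 2 - N * s ^ 2 - M * t ^ 2 = (v - s * a.1 - t * c.1) ^ 2
        + (w - s * a.2 - t * c.2) ^ 2 + (m * s ^ 2 - 2 * σ * s * t + m * t ^ 2) := by
      linear_combination (-s ^ 2) * ha - t ^ 2 * hc - 2 * s * t * hac + 2 * s * e1 + 2 * t * e2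
    have h4 : 0 ≤ m * s ^ 2 - 2 * σ * s * t + m * t ^ 2 := by
      rcases hσ with h | h
      · have : m * s ^ 2 - 2 * σ * s * t + m * t ^ 2 = m * (s - t) ^ 2 := by rw [h]; ring
        rw [this]; positivity
      · have : m * s ^ 2 - 2 * σ * s * t + m * t ^ 2 = m * (s + t) ^ 2 := by rw [h]; ring
        rw [this]; positivity
    rw [h3]
    positivity
  have k1 := K x y
  have k2 := K y z
  have k3 := div_nonneg (K (x * a.1 + y * a.2) (y * a.1 + z * a.2)) hN.le
  have k4 := div_nonneg (K (x * c.1 + y * c.2) (y * c.1 + z * c.2)) hM.le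
  have : x ^ 2 + 2 * y ^ 2 + z ^ 2 - (bil x y z a a ^ 2 / N ^ 2 + 2 * bil x y z a c ^ 2 / (N * M)
      + bil x y z c c ^ 2 / M ^ 2) = (x ^ 2 + y ^ 2 - (x * a.1 + y * a.2) ^ 2 / N
      - (x * c.1 + y * c.2) ^ 2 / M) + (y ^ 2 + z ^ 2 - (y * a.1 + z * a.2) ^ 2 / N
- (y * c.1 + z * c.2) ^ 2 / M)
      + ((x * a.1 + y * a.2) ^ 2 + (y * a.1 + z * a.2) ^ 2
        - ((x * a.1 + y * a.2) * a.1 + (y * a.1 + z * a.2) * a.2) ^ 2 / N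
        - ((x * a.1 + y * a.2) * c.1 + (y * a.1 + z * a.2) * c.2) ^ 2 / M) / N
      + ((x * c.1 + y * c.2) ^ 2 + (y * c.1 + z * c.2) ^ 2
        - ((x * c.1 + y * c.2) * a.1 + (y * c.1 + z * c.2) * a.2) ^ 2 / N
        - ((x * c.1 + y * c.2) * c.1 + (y * c.1 + z * c.2) * c.2) ^ 2 / M) / M := by
    unfold bil
    field_simp
    ring
  linarith

/-- Comparison of the two reference energies with the Frobenius norm on a triangle of longest side
`1`, spanned by the vectors `a` (the shortest side) and `b`. The interpolation parameter `θ` depends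
on the shape of the triangle only. -/
lemma pointwise_unit {a b : Pt} (ha : 0 < a.1 ^ 2 + a.2 ^ 2)
    (h1 : a.1 ^ 2 + a.2 ^ 2 ≤ b.1 ^ 2 + b.2 ^ 2)
    (h2 : a.1 ^ 2 + a.2 ^ 2 ≤ (b.1 - a.1) ^ 2 + (b.2 - a.2) ^ 2)
    (h3 : max (b.1 ^ 2 + b.2 ^ 2) ((b.1 - a.1) ^ 2 + (b.2 - a.2) ^ 2) = 1) :
    ∃ θ : ℝ, 0 ≤ θ ∧ θ ≤ 1 ∧ ∀ x y z : ℝ,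
      (1 - θ) * Qf 1 (2/3) (1/9) (bil x y z a a) (bil x y z a b) (bil x y z b b)
      + θ * Qf (37/16) (23/24) (1/16) (bil x y z a a) (bil x y z a b) (bil x y z b b)
      ≤ x ^ 2 + 2 * y ^ 2 + z ^ 2 := by
  -- `m` is the defect of the second longest side: its squared length is `1 - m`
  obtain ⟨m, σ, hm, hσ, hmb, hs, hsum⟩ : ∃ m σ : ℝ, 0 ≤ m ∧ (σ = m ∨ σ = -m) ∧
      a.1 ^ 2 + a.2 ^ 2 ≤ 1 - m ∧
      (b.1 ^ 2 + b.2 ^ 2) - ((b.1 - a.1) ^ 2 + (b.2 - a.2) ^ 2) = σ ∧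
      (b.1 ^ 2 + b.2 ^ 2) + ((b.1 - a.1) ^ 2 + (b.2 - a.2) ^ 2) = 2 - m := by
    rcases le_total (b.1 ^ 2 + b.2 ^ 2) ((b.1 - a.1) ^ 2 + (b.2 - a.2) ^ 2) with h | h
    · rw [max_eq_right h] at h3
      exact ⟨1 - (b.1 ^ 2 + b.2 ^ 2), _, by linarith, Or.inr (by linarith), by linarith, rfl,
        by linarith⟩
    · rw [max_eq_left h] at h3
      exact ⟨1 - ((b.1 - a.1) ^ 2 + (b.2 - a.2) ^ 2), _, by linarith, Or.inl (by linarith),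
        by linarith, rfl, by linarith⟩
  -- `a` and the doubled median `2b - a` satisfy the hypotheses of `frobenius_ge` with `N = 1 - d`
  -- and `M = 3 + d`; the equilateral triangle has `d = 0`
  set d := 1 - (a.1 ^ 2 + a.2 ^ 2) - m with hd
  have hd0 : 0 ≤ d := by linarith
  have hd1 : d < 1 := by linarith
  have F := frobenius_ge (N := 1 - d) (M := 3 + d) (m := m) (a := a)
    (c := (2 * b.1 - a.1, 2 * b.2 - a.2)) (by linarith) (by linarith) hm hσ (by linarith)
    (by simp only; linarith) (by simp only; linarith)
  have hN : 0 < 1 - d := by linarith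
  have key : ∀ A β γ : ℝ, A * (1 - d) ^ 2 ≤ 1 → β * ((1 - d) * (3 + d)) ≤ 2 →
      γ * (3 + d) ^ 2 ≤ 1 → ∀ x y z : ℝ,
      Qf A β γ (bil x y z a a) (bil x y z a b) (bil x y z b b) ≤ x ^ 2 + 2 * y ^ 2 + z ^ 2 := by
    intro A β γ i1 i2 i3 x y z
    refine le_trans ?_ (F x y z)
    have e1 : bil x y z a (2 * b.1 - a.1, 2 * b.2 - a.2)
        = 2 * bil x y z a b - bil x y z a a := by unfold bil; ring
    have e2 : bil x y z (2 * b.1 - a.1, 2 * b.2 - a.2) (2 * b.1 - a.1, 2 * b.2 - a.2)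
        = 4 * bil x y z b b - 4 * bil x y z a b + bil x y z a a := by unfold bil; ring
    rw [e1, e2]
    unfold Qf
    refine add_le_add (add_le_add ?_ ?_) ?_
    · rw [le_div_iff₀ (by positivity)]
      have := mul_le_mul_of_nonneg_right i1 (sq_nonneg (bil x y z a a))
      linarith
    · rw [le_div_iff₀ (by positivity)]
      have := mul_le_mul_of_nonneg_right i2 (sq_nonneg (2 * bil x y z a b - bil x y z a a))
      linarith
    · rw [le_div_iff₀ (by positivity)]
      have := mul_le_mul_of_nonneg_right i3
        (sq_nonneg (4 * bil x y z b b - 4 * bil x y z a b + bil x y z a a))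
      linarith
  -- the coefficients of the second form are affine functions of `d` evaluated at `d = 21/32`
  rcases le_total d (21/32) with h | h
  · refine ⟨d * (32/21), by positivity, by linarith, fun x y z => ?_⟩
    have := key (1 + 2 * d) (2/3 * (1 + 2 * d / 3)) (1/9 * (1 - 2 * d / 3))
      (by nlinarith [mul_nonneg hd0 hd0, mul_nonneg (mul_nonneg hd0 hd0) hN.le])
      (by nlinarith [mul_nonneg hd0 hd0, mul_nonneg (mul_nonneg hd0 hd0) hd0])
      (by nlinarith [mul_nonneg hd0 hd0, mul_nonneg (mul_nonneg hd0 hd0) hd0]) x y z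
    refine le_trans (le_of_eq ?_) this
    unfold Qf
    ring
  · refine ⟨1, by norm_num, le_refl _, fun x y z => ?_⟩
    have := key (37/16) (23/24) (1/16) (by nlinarith) (by nlinarith) (by nlinarith) x y z
    linarith

/-- `pointwise_unit` rescaled to a triangle with squared longest side `H`. -/
lemma pointwise {a b : Pt} {H : ℝ} (ha : 0 < a.1 ^ 2 + a.2 ^ 2)
    (h1 : a.1 ^ 2 + a.2 ^ 2 ≤ b.1 ^ 2 + b.2 ^ 2)
    (h2 : a.1 ^ 2 + a.2 ^ 2 ≤ (b.1 - a.1) ^ 2 + (b.2 - a.2) ^ 2)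
    (h3 : max (b.1 ^ 2 + b.2 ^ 2) ((b.1 - a.1) ^ 2 + (b.2 - a.2) ^ 2) = H) :
    ∃ θ : ℝ, 0 ≤ θ ∧ θ ≤ 1 ∧ ∀ x y z : ℝ,
      (1 - θ) * Qf 1 (2/3) (1/9) (bil x y z a a) (bil x y z a b) (bil x y z b b)
      + θ * Qf (37/16) (23/24) (1/16) (bil x y z a a) (bil x y z a b) (bil x y z b b)
      ≤ H ^ 2 * (x ^ 2 + 2 * y ^ 2 + z ^ 2) := by
  have hH : 0 < H := by
    rw [← h3]
    exact lt_of_lt_of_le ha (h1.trans (le_max_left _ _))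
  set h := √H
  have hh : h ^ 2 = H := Real.sq_sqrt hH.le
  have hpos : 0 < h := Real.sqrt_pos.mpr hH
  have sc : ∀ s t : ℝ, (s / h) ^ 2 + (t / h) ^ 2 = (s ^ 2 + t ^ 2) / H := by
    intro s t; rw [← hh]; field_simp
  obtain ⟨θ, t0, t1, ht⟩ := pointwise_unit (a := (a.1 / h, a.2 / h)) (b := (b.1 / h, b.2 / h))
    (by simp only [sc]; positivity)
    (by simp only [sc]; gcongr)
    (by simp only [← sub_div, sc]; gcongr)
    (by simp only [← sub_div, sc]; rw [max_div_div_right hH.le, h3, div_self hH.ne'])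
  refine ⟨θ, t0, t1, fun x y z => ?_⟩
  have := mul_le_mul_of_nonneg_left (ht x y z) (sq_nonneg H)
  refine le_trans (le_of_eq ?_) this
  have e : ∀ v w : Pt, bil x y z (v.1 / h, v.2 / h) (w.1 / h, w.2 / h) = bil x y z v w / H := by
    intro v w; unfold bil; rw [← hh]; field_simp
  simp only [e]
  unfold Qf
  field_simp

/-! ### Pull-back of the estimate -/

/-- The linear part of `aff`. -/
def lin (a b : Pt) : Pt →L[ℝ] Pt := (L a.1 b.1).prod (L a.2 b.2)

lemma hasFDerivAt_aff (o a b p : Pt) : HasFDerivAt (aff o a b) (lin a b) p := by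
  have : aff o a b = fun p => lin a b p + o := by
    funext p; ext <;> simp [aff, lin] <;> ring
  rw [this]
  exact (lin a b).hasFDerivAt.add_const o

lemma hasFDerivAt_comp_aff {g : Pt → ℝ} {g' : Pt →L[ℝ] ℝ} {o a b p : Pt}
    (h : HasFDerivAt g g' (aff o a b p)) :
    HasFDerivAt (fun q => g (aff o a b q)) (L (g' a) (g' b)) p := by
  have := h.comp p (hasFDerivAt_aff o a b p)
  refine this.congr_fderiv ?_
  ext
  · have e : lin a b (1, 0) = a := by ext <;> simp [lin]
    simp [e]
  · have e : lin a b (0, 1) = b := by ext <;> simp [lin]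
    simp [e]

section Pullback

variable {v : Pt → ℝ}

lemma hasFDerivAt_fderiv (hv : ContDiff ℝ 2 v) (p w : Pt) :
    HasFDerivAt (fun q => fderiv ℝ v q w) ((fderiv ℝ (fderiv ℝ v) p).flip w) p := by
  have h : Differentiable ℝ (fderiv ℝ v) :=
    (hv.fderiv_right (m := 1) (by norm_num)).differentiable (by norm_num)
  exact ((h p).hasFDerivAt.clm_apply (hasFDerivAt_const w p)).congr_fderiv (by ext <;> simp)

lemma symm_snd (hv : ContDiff ℝ 2 v) (p w w' : Pt) :
    fderiv ℝ (fderiv ℝ v) p w w' = fderiv ℝ (fderiv ℝ v) p w' w :=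
  (hv.contDiffAt.isSymmSndFDerivAt (by simp)) w w'

lemma continuous_snd_fderiv (hv : ContDiff ℝ 2 v) (w w' : Pt) :
    Continuous fun p => fderiv ℝ (fderiv ℝ v) p w w' := by
  have h : Continuous (fderiv ℝ (fderiv ℝ v)) :=
    (hv.fderiv_right (m := 1) (by norm_num)).continuous_fderiv (by norm_num)
  exact (h.clm_apply continuous_const).clm_apply continuous_const

/-- The pull-back of a `C²` function to the reference triangle by the affine map `aff o a b`. -/
def pull (hv : ContDiff ℝ 2 v) (o a b : Pt) : Jet where
  f p := v (aff o a b p)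
  f1 p := fderiv ℝ v (aff o a b p) a
  f2 p := fderiv ℝ v (aff o a b p) b
  f11 p := fderiv ℝ (fderiv ℝ v) (aff o a b p) a a
  f12 p := fderiv ℝ (fderiv ℝ v) (aff o a b p) a b
  f22 p := fderiv ℝ (fderiv ℝ v) (aff o a b p) b b
  d0 p := hasFDerivAt_comp_aff (hv.differentiable (by norm_num) _).hasFDerivAt
  d1 p := by
    have := hasFDerivAt_comp_aff (o := o) (a := a) (b := b) (p := p)
      (hasFDerivAt_fderiv hv (aff o a b p) a)
    simpa only [ContinuousLinearMap.flip_apply, symm_snd hv _ b a] using this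
  d2 p := by
    have := hasFDerivAt_comp_aff (o := o) (a := a) (b := b) (p := p)
      (hasFDerivAt_fderiv hv (aff o a b p) b)
    simpa only [ContinuousLinearMap.flip_apply] using this
  c11 := (continuous_snd_fderiv hv a a).comp (continuous_aff o a b)
  c12 := (continuous_snd_fderiv hv a b).comp (continuous_aff o a b)
  c22 := (continuous_snd_fderiv hv b b).comp (continuous_aff o a b)

lemma pd_eq (hv : ContDiff ℝ 2 v) (p : Pt) :
    pdx (pdx v) p = fderiv ℝ (fderiv ℝ v) p (1, 0) (1, 0) ∧
    pdy (pdx v) p = fderiv ℝ (fderiv ℝ v) p (1, 0) (0, 1) ∧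
    pdx (pdy v) p = fderiv ℝ (fderiv ℝ v) p (1, 0) (0, 1) ∧
    pdy (pdy v) p = fderiv ℝ (fderiv ℝ v) p (0, 1) (0, 1) := by
  have h : ∀ w w' : Pt, fderiv ℝ (fun q => fderiv ℝ v q w) p w' = fderiv ℝ (fderiv ℝ v) p w' w :=
    fun w w' => by rw [(hasFDerivAt_fderiv hv p w).fderiv]; rfl
  refine ⟨h _ _, (h _ _).trans (symm_snd hv _ _ _), h _ _, h _ _⟩

lemma snd_eq_bil (hv : ContDiff ℝ 2 v) (p w w' : Pt) : fderiv ℝ (fderiv ℝ v) p w w'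
    = bil (pdx (pdx v) p) (pdx (pdy v) p) (pdy (pdy v) p) w w' := by
  obtain ⟨h1, -, h3, h4⟩ := pd_eq hv p
  rw [h1, h3, h4]
  have e : ∀ w : Pt, w = w.1 • ((1, 0) : Pt) + w.2 • ((0, 1) : Pt) := fun w => by ext <;> simp
  conv_lhs => rw [e w, e w']
  have s := symm_snd hv p (0, 1) (1, 0)
  simp only [map_add, map_smul, add_apply, smul_apply,
    smul_eq_mul, bil, s]
  ring

end Pullback

lemma Tri_eq (O A B : Pt) : Tri O A B = aff O (A - O) (B - O) '' T := by
  apply Set.Subset.antisymm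
  · refine convexHull_min ?_ ?_
    · rintro p (rfl | rfl | rfl)
      · exact ⟨(0, 0), by simp [T], by simp [aff]⟩
      · exact ⟨(1, 0), by simp [T], by simp [aff]⟩
      · exact ⟨(0, 1), by simp [T], by simp [aff]⟩
    · rintro _ ⟨p, hp, rfl⟩ _ ⟨q, hq, rfl⟩ s t hs ht hst
      refine ⟨s • p + t • q, convex_T hp hq hs ht hst, ?_⟩
      obtain rfl : s = 1 - t := by linarith
      ext <;> simp [aff] <;> ring
  · rintro _ ⟨p, ⟨h1, h2, h3⟩, rfl⟩
    have := (convex_convexHull ℝ ({O, A, B} : Set Pt)).sum_mem (t := (Finset.univ : Finset (Fin 3)))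
      (w := ![1 - p.1 - p.2, p.1, p.2]) (z := ![O, A, B])
      (by intro i _; fin_cases i <;> simp <;> linarith)
      (by simp [Fin.sum_univ_three]; ring)
      (by intro i _; apply subset_convexHull; fin_cases i <;> simp)
    unfold Tri
    convert this using 1
    simp only [Fin.sum_univ_three]
    ext <;> simp [aff] <;> ring

/-- Twice the signed area of the triangle. -/
def det (O A B : Pt) : ℝ := (A.1 - O.1) * (B.2 - O.2) - (A.2 - O.2) * (B.1 - O.1)

lemma det_ne {O A B : Pt} (h : Nondeg O A B) : det O A B ≠ 0 := by
  intro hd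
  apply h
  unfold det at hd
  rw [collinear_iff_of_mem (p₀ := O) (by simp)]
  by_cases hA : A = O
  · refine ⟨B - O, ?_⟩
    rintro p (rfl | rfl | rfl)
    · exact ⟨0, by simp⟩
    · exact ⟨0, by simp [hA]⟩
    · exact ⟨1, by simp⟩
  · refine ⟨A - O, ?_⟩
    rintro p (rfl | rfl | rfl)
    · exact ⟨0, by simp⟩
    · exact ⟨1, by simp⟩
    · by_cases h1 : A.1 - O.1 = 0
      · have h2 : A.2 - O.2 ≠ 0 := fun h2 => hA (by ext <;> linarith)
        refine ⟨(p.2 - O.2) / (A.2 - O.2), ?_⟩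
        have h3 : p.1 - O.1 = 0 := by
          rw [h1] at hd
          rcases mul_eq_zero.mp (show (A.2 - O.2) * (p.1 - O.1) = 0 by linarith) with h | h
          · exact absurd h h2
          · exact h
        ext
        · simp [h1]; linarith
        · simp; field_simp; ring
      · refine ⟨(p.1 - O.1) / (A.1 - O.1), ?_⟩
        ext
        · simp; field_simp; ring
        · simp only [vadd_eq_add, Prod.snd_add, Prod.smul_snd, Prod.snd_sub, smul_eq_mul]
          field_simp
          linarith

/-- Change of variables to the reference triangle; the Jacobian is an unspecified constant, as it
occurs on both sides of the estimate. -/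
lemma exists_jacobian {O A B : Pt} (h : det O A B ≠ 0) : ∃ c : ℝ, 0 ≤ c ∧ ∀ g : Pt → ℝ,
    ∫ p in Tri O A B, g p = c * J (fun p => g (aff O (A - O) (B - O) p)) := by
  refine ⟨|(lin (A - O) (B - O)).det|, abs_nonneg _, fun g => ?_⟩
  rw [Tri_eq, integral_image_eq_integral_abs_det_fderiv_smul volume measurableSet_T
    (fun x _ => (hasFDerivAt_aff O (A - O) (B - O) x).hasFDerivWithinAt)]
  · simp only [smul_eq_mul]
    rw [integral_const_mul]
    rfl
  · intro p _ q _ hpq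
    simp only [aff, Prod.mk.injEq, Prod.fst_sub, Prod.snd_sub] at hpq
    obtain ⟨h1, h2⟩ := hpq
    unfold det at h
    ext
    · apply mul_right_cancel₀ h
      linear_combination (B.2 - O.2) * h1 - (B.1 - O.1) * h2
    · apply mul_right_cancel₀ h
      linear_combination (A.1 - O.1) * h2 - (A.2 - O.2) * h1

/-- The gradient of `v` has mean zero on the edge from `P` to `Q`. -/
def EdgeZero (v : Pt → ℝ) (P Q : Pt) : Prop :=
  ∀ c : Pt, ∫ t in (0:ℝ)..1, fderiv ℝ v (P + t • (Q - P)) c = 0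

/-- The fundamental theorem of calculus controls the tangential derivative, the edge condition the
normal one, and the two directions span the plane. -/
lemma edgeZero {v : Pt → ℝ} (hv : ContDiff ℝ 2 v) {P Q R : Pt} (hPQ : P ≠ Q) (h0 : v P = v Q)
    (h : edgeInt (normalDeriv v P Q R) P Q = 0) : EdgeZero v P Q := by
  have hc : ∀ c : Pt, Continuous fun t : ℝ => fderiv ℝ v (P + t • (Q - P)) c := fun c =>
    ((hv.continuous_fderiv (by norm_num)).comp (by fun_prop)).clm_apply continuous_const
  set d := Q - P with hd
  have dpos : 0 < d.1 ^ 2 + d.2 ^ 2 := by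
    by_contra! hn
    apply hPQ
    have h1 : d.1 = 0 := by nlinarith [sq_nonneg d.1, sq_nonneg d.2]
    have h2 : d.2 = 0 := by nlinarith [sq_nonneg d.1, sq_nonneg d.2]
    simp only [hd, Prod.fst_sub, Prod.snd_sub] at h1 h2
    ext <;> linarith
  have epos : 0 < elen d := Real.sqrt_pos.mpr dpos
  have tang : ∫ t in (0:ℝ)..1, fderiv ℝ v (P + t • d) d = 0 := by
    have := intervalIntegral.integral_eq_sub_of_hasDerivAt (a := 0) (b := 1)
      (f := fun t : ℝ => v (P + t • d)) (f' := fun t => fderiv ℝ v (P + t • d) d)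
      (fun t _ => by
        have h1 : HasDerivAt (fun t : ℝ => P + t • d) d t := by
          simpa using ((hasDerivAt_id t).smul_const d).const_add P
        exact (hv.differentiable (by norm_num) _).hasFDerivAt.comp_hasDerivAt t h1)
      ((hc d).intervalIntegrable _ _)
    rw [this]
    simp [hd, h0]
  have nrm : ∫ t in (0:ℝ)..1, fderiv ℝ v (P + t • d) (d.2, -d.1) = 0 := by
    unfold edgeInt normalDeriv outNormal at h
    rw [← hd] at h
    simp only [map_smul, smul_eq_mul] at h
    rw [intervalIntegral.integral_const_mul] at h
    rcases mul_eq_zero.mp h with h | h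
    · exact absurd h epos.ne'
    · rcases mul_eq_zero.mp h with h | h
      · split_ifs at h
        · exact absurd h (inv_ne_zero epos.ne')
        · exact absurd h (neg_ne_zero.mpr (inv_ne_zero epos.ne'))
      · exact h
  intro c
  have e : c = ((c.1 * d.1 + c.2 * d.2) / (d.1 ^ 2 + d.2 ^ 2)) • d
      + ((c.1 * d.2 - c.2 * d.1) / (d.1 ^ 2 + d.2 ^ 2)) • ((d.2, -d.1) : Pt) := by
    ext <;> simp <;> field_simp <;> ring
  rw [e]
  simp only [map_add, map_smul, smul_eq_mul]
  rw [intervalIntegral.integral_add (((hc _).intervalIntegrable _ _).const_mul _)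
    (((hc _).intervalIntegrable _ _).const_mul _), intervalIntegral.integral_const_mul,
    intervalIntegral.integral_const_mul, tang, nrm]
  simp

/-- A globally `C²` function satisfying the conditions of the Fujino–Morley space. -/
structure Good (v : Pt → ℝ) (O A B : Pt) : Prop where
  smooth : ContDiff ℝ 2 v
  vO : v O = 0
  vA : v A = 0
  vB : v B = 0
  eOA : EdgeZero v O A
  eAB : EdgeZero v A B
  eBO : EdgeZero v B O

lemma Good.cycle {v : Pt → ℝ} {O A B : Pt} (h : Good v O A B) : Good v A B O :=
  ⟨h.smooth, h.vA, h.vB, h.vO, h.eAB, h.eBO, h.eOA⟩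

lemma Good.inV {v : Pt → ℝ} {O A B : Pt} (h : Good v O A B) :
    InV (pull h.smooth O (A - O) (B - O)) := by
  set w := pull h.smooth O (A - O) (B - O) with hw
  have v00 : w.f (0, 0) = 0 := by simp [hw, pull, aff, h.vO]
  have v10 : w.f (1, 0) = 0 := by simp [hw, pull, aff, h.vA]
  have v01 : w.f (0, 1) = 0 := by simp [hw, pull, aff, h.vB]
  have hX : w.X = 0 := by
    have := h.eBO (A - O)
    rw [← flip01] at this
    rw [← this]
    refine intervalIntegral.integral_congr fun t _ => ?_
    simp only [hw, pull]
    congr 2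
    ext <;> simp [aff] <;> ring
  have hY : w.Y = 0 := by
    have := h.eOA (B - O)
    rw [← this]
    refine intervalIntegral.integral_congr fun t _ => ?_
    simp only [hw, pull]
    congr 2
    ext <;> simp [aff]
  have hG : w.G = 0 := by
    have := h.eAB (A - O)
    rw [← this]
    refine intervalIntegral.integral_congr fun t _ => ?_
    simp only [hw, pull]
    congr 2
    ext <;> simp [aff] <;> ring
  exact ⟨v00, v10, v01, by rw [Jet.J11, hG, hX]; ring, by rw [Jet.J12, hG, v00, v10]; ring,
    by rw [Jet.J22, hG, hY, v01, v10]; ring⟩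

lemma elen_sq (v : Pt) : elen v ^ 2 = v.1 ^ 2 + v.2 ^ 2 := Real.sq_sqrt (by positivity)

lemma elen_nonneg (v : Pt) : 0 ≤ elen v := Real.sqrt_nonneg _

lemma longestEdge_cycle (O A B : Pt) : longestEdge A B O = longestEdge O A B := by
  unfold longestEdge
  rw [← max_assoc, max_comm]

lemma Tri_cycle (O A B : Pt) : Tri A B O = Tri O A B := by
  unfold Tri
  congr 1
  ext; simp; tauto

lemma det_cycle (O A B : Pt) : det A B O = det O A B := by unfold det; ring

/-- The estimate when `OA` is a shortest edge. -/
lemma core {v : Pt → ℝ} {O A B : Pt} (h : Good v O A B) (hd : det O A B ≠ 0)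
    (h1 : elen (A - O) ≤ elen (O - B)) (h2 : elen (A - O) ≤ elen (B - A)) :
    18496 / 100 * l2sq v (Tri O A B) ≤ (longestEdge O A B ^ 2) ^ 2 * h2sq v (Tri O A B) := by
  have hH : max ((B - O).1 ^ 2 + (B - O).2 ^ 2)
      (((B - O).1 - (A - O).1) ^ 2 + ((B - O).2 - (A - O).2) ^ 2) = longestEdge O A B ^ 2 := by
    have e1 : (B - O).1 ^ 2 + (B - O).2 ^ 2 = elen (O - B) ^ 2 := by
      rw [elen_sq]; simp only [Prod.fst_sub, Prod.snd_sub]; ring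
    have e2 : ((B - O).1 - (A - O).1) ^ 2 + ((B - O).2 - (A - O).2) ^ 2 = elen (B - A) ^ 2 := by
      rw [elen_sq]; simp only [Prod.fst_sub, Prod.snd_sub]; ring
    rw [e1, e2]
    unfold longestEdge
    rw [max_eq_right (h2.trans (le_max_left _ _))]
    rcases le_total (elen (B - A)) (elen (O - B)) with hl | hl
    · rw [max_eq_right hl, max_eq_left (pow_le_pow_left₀ (elen_nonneg _) hl 2)]
    · rw [max_eq_left hl, max_eq_right (pow_le_pow_left₀ (elen_nonneg _) hl 2)]
  have s1 := pow_le_pow_left₀ (elen_nonneg _) h1 2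
  have s2 := pow_le_pow_left₀ (elen_nonneg _) h2 2
  simp only [elen_sq, Prod.fst_sub, Prod.snd_sub] at s1 s2
  have apos : 0 < (A - O).1 ^ 2 + (A - O).2 ^ 2 := by
    by_contra! hn
    have k1 : (A - O).1 = 0 := by nlinarith [sq_nonneg (A - O).1, sq_nonneg (A - O).2]
    have k2 : (A - O).2 = 0 := by nlinarith [sq_nonneg (A - O).1, sq_nonneg (A - O).2]
    simp only [Prod.fst_sub, Prod.snd_sub] at k1 k2
    exact hd (by unfold det; rw [k1, k2]; ring)
  obtain ⟨θ, t0, t1, ht⟩ := pointwise apos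
    (by simp only [Prod.fst_sub, Prod.snd_sub]; linarith)
    (by simp only [Prod.fst_sub, Prod.snd_sub]; linarith) hH
  have hv := h.smooth
  set w := pull hv O (A - O) (B - O) with hw
  have inv : InV w := h.inV
  obtain ⟨c, c0, hc⟩ := exists_jacobian hd
  have b1 := mul_le_mul_of_nonneg_left (bound_iso inv) (sub_nonneg.mpr t1)
  have b2 := mul_le_mul_of_nonneg_left (bound_aniso inv) t0
  have hcx : Continuous fun p => pdx (pdx v) p ^ 2 + pdy (pdx v) p ^ 2 + pdx (pdy v) p ^ 2
      + pdy (pdy v) p ^ 2 := by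
    have c1 := continuous_snd_fderiv hv (1, 0) (1, 0)
    have c2 := continuous_snd_fderiv hv (1, 0) (0, 1)
    have c3 := continuous_snd_fderiv hv (0, 1) (0, 1)
    simp only [fun p => (pd_eq hv p).1, fun p => (pd_eq hv p).2.1, fun p => (pd_eq hv p).2.2.1,
      fun p => (pd_eq hv p).2.2.2]
    fun_prop
  have b3 : (1 - θ) * En 1 (2/3) (1/9) w + θ * En (37/16) (23/24) (1/16) w
      ≤ (longestEdge O A B ^ 2) ^ 2 * J (fun p => pdx (pdx v) (aff O (A - O) (B - O) p) ^ 2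
        + pdy (pdx v) (aff O (A - O) (B - O) p) ^ 2 + pdx (pdy v) (aff O (A - O) (B - O) p) ^ 2
        + pdy (pdy v) (aff O (A - O) (B - O) p) ^ 2) := by
    unfold En
    rw [← J_comb (continuous_Qf _ _ _ w.c11 w.c12 w.c22)
      (continuous_Qf _ _ _ w.c11 w.c12 w.c22), ← J_mul]
    refine J_mono ((continuous_const.mul (continuous_Qf _ _ _ w.c11 w.c12 w.c22)).add
      (continuous_const.mul (continuous_Qf _ _ _ w.c11 w.c12 w.c22)))
      (continuous_const.mul (hcx.comp (continuous_aff _ _ _))) fun p _ => ?_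
    set q := aff O (A - O) (B - O) p with hq
    have e11 : w.f11 p = bil (pdx (pdx v) q) (pdx (pdy v) q) (pdy (pdy v) q) (A - O) (A - O) :=
      snd_eq_bil hv _ _ _
    have e12 : w.f12 p = bil (pdx (pdx v) q) (pdx (pdy v) q) (pdy (pdy v) q) (A - O) (B - O) :=
      snd_eq_bil hv _ _ _
    have e22 : w.f22 p = bil (pdx (pdx v) q) (pdx (pdy v) q) (pdy (pdy v) q) (B - O) (B - O) :=
      snd_eq_bil hv _ _ _
    rw [e11, e12, e22, (pd_eq hv q).2.1, ← (pd_eq hv q).2.2.1]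
    refine (ht _ _ _).trans (le_of_eq ?_)
    ring
  have el : l2sq v (Tri O A B) = c * N2 w := hc _
  have eh : h2sq v (Tri O A B) = c * J (fun p => pdx (pdx v) (aff O (A - O) (B - O) p) ^ 2
        + pdy (pdx v) (aff O (A - O) (B - O) p) ^ 2 + pdx (pdy v) (aff O (A - O) (B - O) p) ^ 2
        + pdy (pdy v) (aff O (A - O) (B - O) p) ^ 2) := hc _
  rw [el, eh]
  have := mul_le_mul_of_nonneg_left b3 c0
  have b4 := mul_le_mul_of_nonneg_left (add_le_add b1 b2) c0
  linarith

lemma core_all {v : Pt → ℝ} {O A B : Pt} (h : Good v O A B) (hd : det O A B ≠ 0) :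
    18496 / 100 * l2sq v (Tri O A B) ≤ (longestEdge O A B ^ 2) ^ 2 * h2sq v (Tri O A B) := by
  have c1 := fun h1 h2 => core h hd h1 h2
  have c2 := fun h1 h2 => core h.cycle (by rwa [det_cycle]) h1 h2
  have c3 := fun h1 h2 => core h.cycle.cycle (by rwa [det_cycle, det_cycle]) h1 h2
  simp only [longestEdge_cycle, Tri_cycle] at c2 c3
  rcases le_total (elen (A - O)) (elen (B - A)) with i | i <;>
  rcases le_total (elen (B - A)) (elen (O - B)) with j | j <;>
  rcases le_total (elen (O - B)) (elen (A - O)) with k | k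
  all_goals first
    | exact c1 (by linarith) (by linarith)
    | exact c2 (by linarith) (by linarith)
    | exact c3 (by linarith) (by linarith)

open scoped Manifold ContDiff in
/-- Cutting off outside a neighborhood of the triangle makes a function of class `C²` near it
globally `C²`, without changing it near the triangle. -/
lemma exists_extension {u : Pt → ℝ} {K : Set Pt} (hK : IsClosed K) (h : Smooth2 u K) :
    ∃ v : Pt → ℝ, ContDiff ℝ 2 v ∧ ∀ p ∈ K, v =ᶠ[nhds p] u := by
  obtain ⟨U, hU, hKU, hu⟩ := h
  obtain ⟨f, h0, h1, -⟩ := exists_contMDiffMap_zero_one_nhds_of_isClosed (n := 2) 𝓘(ℝ, Pt)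
    hU.isClosed_compl hK (Set.disjoint_left.mpr fun p hp hp' => hp (hKU hp'))
  refine ⟨fun p => f p * u p, ?_, ?_⟩
  · rw [contDiff_iff_contDiffAt]
    intro p
    by_cases hp : p ∈ U
    · exact f.contMDiff.contDiff.contDiffAt.mul (hu.contDiffAt (hU.mem_nhds hp))
    · refine (contDiffAt_const (c := (0:ℝ))).congr_of_eventuallyEq ?_
      filter_upwards [Filter.Eventually.filter_mono (nhds_le_nhdsSet hp) h0] with q hq
      rw [hq, zero_mul]
  · intro p hp
    filter_upwards [Filter.Eventually.filter_mono (nhds_le_nhdsSet hp) h1] with q hq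
    rw [hq, one_mul]

lemma edgeInt_congr {u v : Pt → ℝ} {P Q R : Pt} {K : Set Pt} (hK : Convex ℝ K) (hP : P ∈ K)
    (hQ : Q ∈ K) (h : ∀ p ∈ K, v =ᶠ[nhds p] u) :
    edgeInt (normalDeriv v P Q R) P Q = edgeInt (normalDeriv u P Q R) P Q := by
  unfold edgeInt
  congr 1
  refine intervalIntegral.integral_congr fun t ht => ?_
  rw [Set.uIcc_of_le zero_le_one] at ht
  unfold normalDeriv
  have := (h _ (hK.add_smul_sub_mem hP hQ ht)).fderiv_eq (𝕜 := ℝ)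
  simp only [this]

lemma sq_congr {u v : Pt → ℝ} {K : Set Pt} (hK : MeasurableSet K)
    (h : ∀ p ∈ K, v =ᶠ[nhds p] u) : l2sq v K = l2sq u K ∧ h2sq v K = h2sq u K := by
  constructor
  · refine setIntegral_congr_fun hK fun p hp => ?_
    simp only [(h p hp).eq_of_nhds]
  · refine setIntegral_congr_fun hK fun p hp => ?_
    have e : ∀ w w' : Pt, fderiv ℝ (fun q => fderiv ℝ v q w) p w'
        = fderiv ℝ (fun q => fderiv ℝ u q w) p w' := by
      intro w w'
      have : (fun q => fderiv ℝ v q w) =ᶠ[nhds p] fun q => fderiv ℝ u q w := by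
        filter_upwards [(h p hp).fderiv (𝕜 := ℝ)] with q hq
        rw [hq]
      rw [this.fderiv_eq]
    have e' : ∀ w w' : Pt, fderiv ℝ (fun q => fderiv ℝ v q w) p w' ^ 2
        = fderiv ℝ (fun q => fderiv ℝ u q w) p w' ^ 2 := fun w w' => by rw [e]
    exact congrArg₂ (· + ·) (congrArg₂ (· + ·) (congrArg₂ (· + ·) (e' _ _) (e' _ _)) (e' _ _))
      (e' _ _)

lemma sq_bound {O A B : Pt} (hK : Nondeg O A B) {u : Pt → ℝ} (hu : MemVFM u O A B) :
    18496 / 100 * l2sq u (Tri O A B) ≤ (longestEdge O A B ^ 2) ^ 2 * h2sq u (Tri O A B) := by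
  obtain ⟨hs, uO, uA, uB, e1, e2, e3⟩ := hu
  have hd := det_ne hK
  have hcl : IsClosed (Tri O A B) := by
    rw [Tri_eq]
    exact (isCompact_T.image (continuous_aff _ _ _)).isClosed
  have hcv : Convex ℝ (Tri O A B) := convex_convexHull _ _
  have mO : O ∈ Tri O A B := subset_convexHull _ _ (by simp)
  have mA : A ∈ Tri O A B := subset_convexHull _ _ (by simp)
  have mB : B ∈ Tri O A B := subset_convexHull _ _ (by simp)
  obtain ⟨v, hv, hvu⟩ := exists_extension hcl hs
  have vO : v O = 0 := (hvu O mO).eq_of_nhds.trans uO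
  have vA : v A = 0 := (hvu A mA).eq_of_nhds.trans uA
  have vB : v B = 0 := (hvu B mB).eq_of_nhds.trans uB
  have nOA : O ≠ A := by rintro rfl; exact hd (by unfold det; ring)
  have nAB : A ≠ B := by rintro rfl; exact hd (by unfold det; ring)
  have nBO : B ≠ O := by rintro rfl; exact hd (by unfold det; ring)
  have good : Good v O A B := ⟨hv, vO, vA, vB,
    edgeZero hv nOA (vO.trans vA.symm) ((edgeInt_congr hcv mO mA hvu).trans e1),
    edgeZero hv nAB (vA.trans vB.symm) ((edgeInt_congr hcv mA mB hvu).trans e2),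
    edgeZero hv nBO (vB.trans vO.symm) ((edgeInt_congr hcv mB mO hvu).trans e3)⟩
  obtain ⟨q1, q2⟩ := sq_congr hcl.measurableSet hvu
  rw [← q1, ← q2]
  exact core_all good hd

end FM


/-- For every nondegenerate triangle `K` with longest edge length `h` and every
`u ∈ V_FM(K)`, `‖u‖_K ≤ 0.07353 h² ‖D²u‖_K`. -/
theorem stmt_0 (O A B : Pt) (hK : Nondeg O A B) (u : Pt → ℝ) (hu : MemVFM u O A B) :
    l2norm u (Tri O A B) ≤ 0.07353 * (longestEdge O A B) ^ 2 * h2norm u (Tri O A B) := by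
  have h := FM.sq_bound hK hu
  have hl : 0 ≤ l2sq u (Tri O A B) := integral_nonneg fun _ => sq_nonneg _
  have hh : 0 ≤ h2sq u (Tri O A B) := integral_nonneg fun _ => by positivity
  unfold l2norm h2norm
  apply Real.sqrt_le_iff.mpr
  refine ⟨by positivity, ?_⟩
  rw [mul_pow, mul_pow, Real.sq_sqrt hh]
  -- `0.07353² ⬝ 184.96 ≥ 1`
  nlinarith
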